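/- For every Q ∈ Ω_E, the infimum d_V(Q) = inf{ L_V(x) : x ∈ X_Q } is attained on at least one curve γ_Q ∈ H¹([0,1],ℝ^N) such that: (E−V(γ_Q)) g(γ̇_Q,γ̇_Q) is constant; γ_Q((0,1]) ⊂ Ω_E and γ_Q is of class C² on (0,1); and γ_Q satisfies ∫_0^1 (E−V(γ_Q)) g(γ̇_Q, Dξ/ds) ds − ½∫_0^1 g(γ̇_Q,γ̇_Q) g(∇V(γ_Q),ξ) ds = 0 for all ξ ∈ C∞_0((0,1),ℝ^N). -/

import Mathlib

open MeasureTheory Set Matrix Filter Topology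

namespace JacobiPaper

noncomputable section

/-- Points/vectors of the ambient space `ℝ^N` in which the manifold `M` is
topologically embedded as an open subset. -/
abbrev Vec (N : ℕ) := Fin N → ℝ

variable {N : ℕ}

/-- The inner product determined by a field of matrices `g` at the point `x`. -/
def gP (g : Vec N → Matrix (Fin N) (Fin N) ℝ) (x v w : Vec N) : ℝ :=
  ∑ i, ∑ j, g x i j * v i * w j

/-- The Euclidean gradient (the differential, as a vector). -/
def euclGrad (V : Vec N → ℝ) (x : Vec N) : Vec N :=
  fun i => fderiv ℝ V x (Pi.single i 1)

/-- The setting of the paper: a `C³` Riemannian metric `g` on a neighborhood `U` of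
the compact sublevel `V⁻¹((-∞,E])`, with `V` of class `C²` there and `E` a regular
value of `V`. -/
structure Setting (N : ℕ) where
  g : Vec N → Matrix (Fin N) (Fin N) ℝ
  V : Vec N → ℝ
  E : ℝ
  U : Set (Vec N)
  hdim : 1 ≤ N
  hU : IsOpen U
  hsub : {x | V x ≤ E} ⊆ U
  hgC : ∀ i j, ContDiffOn ℝ 3 (fun x => g x i j) U
  hgsymm : ∀ x ∈ U, ∀ i j, g x i j = g x j i
  hgpos : ∀ x ∈ U, ∀ v : Vec N, v ≠ 0 → 0 < gP g x v v
  hVC : ContDiffOn ℝ 2 V U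
  hreg : ∀ x, V x = E → euclGrad V x ≠ 0
  hcomp : IsCompact {x : Vec N | V x ≤ E}

namespace Setting

variable (S : Setting N)

/-- The Riemannian inner product `g_x(v,w)`. -/
def prod (x v w : Vec N) : ℝ := gP S.g x v w

/-- The Riemannian norm `‖v‖_x`. -/
def gnorm (x v : Vec N) : ℝ := Real.sqrt (S.prod x v v)

/-- The gradient of `V` with respect to `g`. -/
def grad (x : Vec N) : Vec N := (S.g x)⁻¹ *ᵥ euclGrad S.V x

/-- Christoffel symbols `Γ^k_{ij}` of the Levi-Civita connection of `g`. -/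
def christoffel (x : Vec N) (k i j : Fin N) : ℝ :=
  (1/2) * ∑ l, (S.g x)⁻¹ k l *
    (fderiv ℝ (fun y => S.g y l j) x (Pi.single i 1)
     + fderiv ℝ (fun y => S.g y l i) x (Pi.single j 1)
     - fderiv ℝ (fun y => S.g y i j) x (Pi.single l 1))

/-- Covariant derivative, along the curve `q` with velocity `q'`, of the vector field
`ξ` whose (pointwise) derivative is `ξ'`. -/
def covD (q q' ξ ξ' : ℝ → Vec N) (s : ℝ) : Vec N :=
  fun k => ξ' s k + ∑ i, ∑ j, S.christoffel (q s) k i j * q' s i * ξ s j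

/-- The Riemann curvature tensor `R(u,v)w` of `g` at `x`. -/
def curv (x u v w : Vec N) : Vec N :=
  fun l => ∑ i, ∑ j, ∑ k, u i * v j * w k *
    (fderiv ℝ (fun y => S.christoffel y l j k) x (Pi.single i 1)
     - fderiv ℝ (fun y => S.christoffel y l i k) x (Pi.single j 1)
     + ∑ m, (S.christoffel x l i m * S.christoffel x m j k
             - S.christoffel x l j m * S.christoffel x m i k))

/-- The Hessian operator of `V` with respect to `g`: `ξ ↦ ∇_ξ ∇V`. -/
def hessV (x ξ : Vec N) : Vec N :=
  fun k => ∑ i, ξ i * (fderiv ℝ (fun y => S.grad y k) x (Pi.single i 1)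
    + ∑ j, S.christoffel x k i j * S.grad x j)

/-- The Jacobi-metric geodesic equation (eq. (2.5) of the paper) at the instant `s`,
for a curve `x` with derivative `x'` and second derivative `x''`. -/
def GeoEqAt (x x' x'' : ℝ → Vec N) (s : ℝ) : Prop :=
  ∀ k, (S.E - S.V (x s)) * S.covD x x' x' x'' s k
    - S.prod (x s) (S.grad (x s)) (x' s) * x' s k
    + (1/2) * S.prod (x s) (x' s) (x' s) * S.grad (x s) k = 0

end Setting

/-- `q` is of class `C²` on `I` with first derivative `q'` and second derivative `q''`. -/
def C2OnWith (q q' q'' : ℝ → Vec N) (I : Set ℝ) : Prop :=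
  (∀ t ∈ I, HasDerivWithinAt q (q' t) I t) ∧
  (∀ t ∈ I, HasDerivWithinAt q' (q'' t) I t) ∧
  ContinuousOn q'' I

/-- `x` belongs to the Sobolev space `H¹([a,b],ℝ^N)`: it is absolutely continuous
(primitive of its a.e. derivative) with square-integrable derivative. -/
def H1On (x : ℝ → Vec N) (a b : ℝ) : Prop :=
  ContinuousOn x (Icc a b) ∧
  IntegrableOn (deriv x) (Icc a b) ∧
  IntegrableOn (fun s => ‖deriv x s‖ ^ 2) (Icc a b) ∧
  ∀ t ∈ Icc a b, x t = x a + ∫ s in a..t, deriv x s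

/-- `x` is absolutely continuous on `[a,b]`. -/
def ACOn (x : ℝ → Vec N) (a b : ℝ) : Prop :=
  ContinuousOn x (Icc a b) ∧
  IntegrableOn (deriv x) (Icc a b) ∧
  ∀ t ∈ Icc a b, x t = x a + ∫ s in a..t, deriv x s

namespace Setting

variable (S : Setting N)

/-- The weak (distributional) form (eq. (2.7)) of the Jacobi geodesic equation on `(a,b)`,
tested against all `ξ ∈ C^∞_0((a,b),ℝ^N)`. -/
def WeakGeo (x : ℝ → Vec N) (a b : ℝ) : Prop :=
  ∀ ξ : ℝ → Vec N, ContDiff ℝ (⊤ : ℕ∞) ξ → tsupport ξ ⊆ Ioo a b →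
    (∫ s in a..b,
      ((S.E - S.V (x s)) * S.prod (x s) (deriv x s) (S.covD x (deriv x) ξ (deriv ξ) s)
        - (1/2) * S.prod (x s) (deriv x s) (deriv x s)
            * S.prod (x s) (S.grad (x s)) (ξ s))) = 0

/-- The space `X_Q`. -/
def InXQ (Q : Vec N) (x : ℝ → Vec N) : Prop :=
  H1On x 0 1 ∧ S.V (x 0) = S.E ∧ (∀ s ∈ Ioc (0:ℝ) 1, S.V (x s) < S.E) ∧ x 1 = Q

/-- The Jacobi length functional `L_V`. -/
def LV (x : ℝ → Vec N) : ℝ :=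
  ∫ s in (0:ℝ)..1,
    Real.sqrt ((1/2) * (S.E - S.V (x s)) * S.prod (x s) (deriv x s) (deriv x s))

/-- The distance `d_V(Q)` from `Q` to the boundary of the potential well. -/
def dV (Q : Vec N) : ℝ := sInf {r | ∃ x, S.InXQ Q x ∧ r = S.LV x}

/-- `γ : [0,a] → M` is a `g_*`-geodesic starting at `V⁻¹(E)`, staying in the potential
well for `s > 0`, parameterized by arc length (`½ g(γ̇,γ̇)(E−V(γ)) ≡ 1`). -/
def IsBdryGeo (γ : ℝ → Vec N) (a : ℝ) : Prop :=
  0 < a ∧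
  ContinuousOn γ (Icc 0 a) ∧
  (∀ s ∈ Ioc (0:ℝ) a, ContDiffAt ℝ 2 γ s) ∧
  S.V (γ 0) = S.E ∧
  (∀ s ∈ Ioc (0:ℝ) a, S.V (γ s) < S.E) ∧
  (∀ s ∈ Ioc (0:ℝ) a, S.GeoEqAt γ (deriv γ) (deriv (deriv γ)) s) ∧
  (∀ s ∈ Ioc (0:ℝ) a, (1/2) * S.prod (γ s) (deriv γ s) (deriv γ s) * (S.E - S.V (γ s)) = 1)

/-- The index form `I_{s₁,s₂}(ξ,η)` along `γ`. -/
def idxForm (γ : ℝ → Vec N) (s₁ s₂ : ℝ) (ξ η : ℝ → Vec N) : ℝ :=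
  ∫ u in s₁..s₂,
    ((S.E - S.V (γ u)) *
        (S.prod (γ u) (S.covD γ (deriv γ) ξ (deriv ξ) u) (S.covD γ (deriv γ) η (deriv η) u)
          + S.prod (γ u) (S.curv (γ u) (deriv γ u) (ξ u) (deriv γ u)) (η u))
      - (S.prod (γ u) (S.grad (γ u)) (ξ u)
            * S.prod (γ u) (deriv γ u) (S.covD γ (deriv γ) η (deriv η) u)
          + S.prod (γ u) (deriv γ u) (S.covD γ (deriv γ) ξ (deriv ξ) u)
            * S.prod (γ u) (S.grad (γ u)) (η u)
          + (1/2) * S.prod (γ u) (S.hessV (γ u) (ξ u)) (η u)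
            * S.prod (γ u) (deriv γ u) (deriv γ u)))

/-- Membership in the space `Y_s^W`: absolutely continuous vector fields along `γ|[0,s]`
with finite weighted norm, with `ξ(0) ∈ T_{γ(0)}V⁻¹(E)` and `ξ(s) = W`. -/
def InY (γ : ℝ → Vec N) (s : ℝ) (W : Vec N) (ξ : ℝ → Vec N) : Prop :=
  ACOn ξ 0 s ∧
  IntegrableOn (fun u => (S.E - S.V (γ u)) *
      S.prod (γ u) (S.covD γ (deriv γ) ξ (deriv ξ) u)
        (S.covD γ (deriv γ) ξ (deriv ξ) u)) (Icc 0 s) ∧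
  S.prod (γ 0) (S.grad (γ 0)) (ξ 0) = 0 ∧
  ξ s = W

/-- The weighted squared norm `⟨ξ,ξ⟩_{0,s}`. -/
def wNormSq (γ : ℝ → Vec N) (s : ℝ) (ξ : ℝ → Vec N) : ℝ :=
  ∫ u in (0:ℝ)..s, (S.E - S.V (γ u)) *
    S.prod (γ u) (S.covD γ (deriv γ) ξ (deriv ξ) u) (S.covD γ (deriv γ) ξ (deriv ξ) u)

/-- The Jacobi field equation (eq. (4.9)) at the instant `u`. -/
def JacobiEqAt (γ ξ : ℝ → Vec N) (u : ℝ) : Prop :=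
  ∀ k, - deriv (fun t => (S.E - S.V (γ t)) * S.covD γ (deriv γ) ξ (deriv ξ) t k) u
      + (S.E - S.V (γ u)) * S.curv (γ u) (deriv γ u) (ξ u) (deriv γ u) k
      + deriv (fun t => S.prod (γ t) (S.grad (γ t)) (ξ t) * deriv γ t k) u
      - S.prod (γ u) (deriv γ u) (S.covD γ (deriv γ) ξ (deriv ξ) u) * S.grad (γ u) k
      - (1/2) * S.prod (γ u) (deriv γ u) (deriv γ u) * S.hessV (γ u) (ξ u) k = 0

/-- `ξ` is a Jacobi field along `γ|[0,s]`: of class `C⁰([0,s]) ∩ C²((0,s])` and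
solving the Jacobi equation on `(0,s]`. -/
def IsJacobi (γ ξ : ℝ → Vec N) (s : ℝ) : Prop :=
  ContinuousOn ξ (Icc 0 s) ∧ (∀ u ∈ Ioc (0:ℝ) s, ContDiffAt ℝ 2 ξ u) ∧
  ∀ u ∈ Ioc (0:ℝ) s, S.JacobiEqAt γ ξ u

/-- The boundary condition (eq. (4.10)): the continuous extension at `s = 0` of
`(E−V(γ))Dξ/ds − g(∇V(γ),ξ)γ̇` is parallel to `∇V(γ(0))`. -/
def BdryCond (γ ξ : ℝ → Vec N) : Prop :=
  ∃ c : ℝ, Tendsto (fun u => (fun k => (S.E - S.V (γ u)) * S.covD γ (deriv γ) ξ (deriv ξ) u k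
      - S.prod (γ u) (S.grad (γ u)) (ξ u) * deriv γ u k))
    (nhdsWithin 0 (Ioi 0)) (nhds (c • S.grad (γ 0)))

end Setting

/-- The family `ξ : Fin n → (ℝ → Vec N)` is linearly independent as fields on `I`. -/
def IndepOn {n : ℕ} (I : Set ℝ) (ξ : Fin n → ℝ → Vec N) : Prop :=
  ∀ c : Fin n → ℝ, (∀ u ∈ I, (∑ i, c i • ξ i) u = 0) → c = 0

/-- The index of the quadratic form `B` on the class `C` of vector fields (regarded as
fields on `I`) is at least `n`. -/
def IndexGe {N : ℕ} (B : (ℝ → Vec N) → ℝ) (C : (ℝ → Vec N) → Prop) (I : Set ℝ) (n : ℕ) : Prop :=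
  ∃ ξ : Fin n → ℝ → Vec N, (∀ i, C (ξ i)) ∧ IndepOn I ξ ∧
    ∀ c : Fin n → ℝ, c ≠ 0 → B (∑ i, c i • ξ i) < 0

/-- The index of the quadratic form `B` on the class `C` equals `n`. -/
def IndexEq {N : ℕ} (B : (ℝ → Vec N) → ℝ) (C : (ℝ → Vec N) → Prop) (I : Set ℝ) (n : ℕ) : Prop :=
  IndexGe B C I n ∧ ¬ IndexGe B C I (n+1)

/-- The nullity of a bilinear form `B` on the class `C` is at least `n`. -/
def NullGe {N : ℕ} (B : (ℝ → Vec N) → (ℝ → Vec N) → ℝ) (C : (ℝ → Vec N) → Prop)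
    (I : Set ℝ) (n : ℕ) : Prop :=
  ∃ ξ : Fin n → ℝ → Vec N, (∀ i, C (ξ i)) ∧ IndepOn I ξ ∧
    ∀ i, ∀ η, C η → B (ξ i) η = 0

/-- The nullity of a bilinear form `B` on the class `C` equals `n`. -/
def NullEq {N : ℕ} (B : (ℝ → Vec N) → (ℝ → Vec N) → ℝ) (C : (ℝ → Vec N) → Prop)
    (I : Set ℝ) (n : ℕ) : Prop :=
  NullGe B C I n ∧ ¬ NullGe B C I (n+1)

namespace Setting

variable (S : Setting N)

/-- `ξ` is a (nontrivial candidate) field realizing conjugacy at `γ(s)`: a Jacobi field in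
`Y_s` satisfying the boundary condition (4.10). -/
def ConjField (γ : ℝ → Vec N) (s : ℝ) (ξ : ℝ → Vec N) : Prop :=
  S.InY γ s 0 ξ ∧ S.IsJacobi γ ξ s ∧ S.BdryCond γ ξ

/-- `γ(s)` is conjugate to `V⁻¹(E)` with multiplicity at least `n`. -/
def MultGe (γ : ℝ → Vec N) (s : ℝ) (n : ℕ) : Prop :=
  ∃ ξ : Fin n → ℝ → Vec N, (∀ i, S.ConjField γ s (ξ i)) ∧ IndepOn (Icc 0 s) ξ

/-- `γ(s)` is conjugate to `V⁻¹(E)`. -/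
def IsConj (γ : ℝ → Vec N) (s : ℝ) : Prop := S.MultGe γ s 1

/-- `γ(s)` is conjugate to `V⁻¹(E)` with multiplicity exactly `n`. -/
def Mult (γ : ℝ → Vec N) (s : ℝ) (n : ℕ) : Prop :=
  S.MultGe γ s n ∧ ¬ S.MultGe γ s (n+1)

end Setting

/-! The length `L_V` is the length of the Jacobi metric `½ (E - V) g`, which degenerates on the
boundary of the well. A minimizing sequence, reparametrized with constant speed, is compact
because `√(E - V)` still controls the speed away from the boundary; by Cauchy–Schwarz,
`(∫ √L)² ≤ ∫ L` with equality for constant speed, so lower semicontinuity of the energy `∫ L`,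
`L(x, v) = ½ (E - V) g(v, v)`, makes the limit curve minimize the energy as well as the length.
Its first variation and the du Bois-Reymond lemma give absolutely continuous momenta
`(E - V) g γ̇`; inverting the Legendre transformation bootstraps the curve to class `C²`, and the
Koszul formula turns the Euler–Lagrange equation into its covariant form. -/

section Calculus

lemma lipschitzOnWith_Icc_of_norm_sub_le {E : Type*} [SeminormedAddCommGroup E] {z : ℝ → E}
    {a b : ℝ} {K : NNReal}
    (h : ∀ s t, a ≤ s → s ≤ t → t ≤ b → ‖z t - z s‖ ≤ K * (t - s)) :
    LipschitzOnWith K z (Icc a b) := by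
  refine LipschitzOnWith.of_dist_le_mul fun s hs t ht => ?_
  wlog hst : s ≤ t generalizing s t
  · rw [dist_comm, dist_comm s]
    exact this t ht s hs (le_of_not_ge hst)
  rw [dist_comm, dist_comm s, dist_eq_norm, Real.dist_eq, abs_of_nonneg (by linarith)]
  exact h s t hs.1 hst ht.2

variable {E : Type*} [NormedAddCommGroup E] [NormedSpace ℝ E]

lemma ae_restrict_Icc_iff {p : ℝ → Prop} {a b : ℝ} :
    (∀ᵐ s ∂volume.restrict (Icc a b), p s) ↔ ∀ᵐ s, s ∈ Ioo a b → p s := by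
  rw [← restrict_Ioo_eq_restrict_Icc, ae_restrict_iff' measurableSet_Ioo]

lemma ae_hasDerivAt_of_eq_integral [CompleteSpace E] {z f : ℝ → E} {a b : ℝ}
    (hf : IntegrableOn f (Icc a b)) (hz : ∀ t ∈ Icc a b, z t = z a + ∫ s in a..t, f s) :
    ∀ᵐ s ∂volume.restrict (Icc a b), HasDerivAt z (f s) s := by
  rcases lt_or_ge b a with hab | hab
  · simp [Icc_eq_empty (not_le.2 hab)]
  have hint := (intervalIntegrable_iff_integrableOn_Icc_of_le hab).2 hf
  rw [ae_restrict_Icc_iff]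
  filter_upwards [hint.ae_hasDerivAt_integral] with s hs hsI
  rw [uIcc_of_le hab] at hs
  have hprim := hs (Ioo_subset_Icc_self hsI) a (left_mem_Icc.2 hab)
  refine (hprim.const_add (z a)).congr_of_eventuallyEq ?_
  filter_upwards [Icc_mem_nhds hsI.1 hsI.2] with t ht using hz t ht

lemma integral_deriv_of_lipschitzOnWith [FiniteDimensional ℝ E] {z : ℝ → E} {a b : ℝ}
    {K : NNReal} (hab : a ≤ b) (h : LipschitzOnWith K z (Icc a b)) :
    ∫ s in a..b, deriv z s = z b - z a := by
  have hle : ∀ s ∈ Ioo a b, ‖deriv z s‖ ≤ K := fun s hs =>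
    norm_deriv_le_of_lipschitzOn (Icc_mem_nhds hs.1 hs.2) h
  have hint : IntegrableOn (deriv z) (Icc a b) :=
    IntegrableOn.of_bound measure_Icc_lt_top (stronglyMeasurable_deriv z).aestronglyMeasurable K
      (ae_restrict_Icc_iff.2 (Eventually.of_forall hle))
  refine (SeparatingDual.eq_iff_forall_dual_eq (R := ℝ)).2 fun ℓ => ?_
  have hac : AbsolutelyContinuousOnInterval (fun s => ℓ (z s)) a b := by
    rw [← uIcc_of_le hab] at h
    exact (ℓ.lipschitz.comp_lipschitzOnWith h).absolutelyContinuousOnInterval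
  rw [← ℓ.intervalIntegral_comp_comm
    ((intervalIntegrable_iff_integrableOn_Icc_of_le hab).2 hint), map_sub,
    ← hac.integral_deriv_eq_sub, intervalIntegral.integral_of_le hab,
    intervalIntegral.integral_of_le hab]
  refine integral_congr_ae (ae_restrict_of_ae_restrict_of_subset Ioc_subset_Icc_self
    (ae_restrict_Icc_iff.2 ?_))
  filter_upwards [h.ae_differentiableWithinAt_of_mem_real] with s hs hsI
  have hd := (hs (Ioo_subset_Icc_self hsI)).differentiableAt (Icc_mem_nhds hsI.1 hsI.2)
  exact (ℓ.hasFDerivAt.comp_hasDerivAt s hd.hasDerivAt).deriv.symm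

lemma hasDerivAt_primitive [CompleteSpace E] {f : ℝ → E} {a b s : ℝ}
    (hf : IntegrableOn f (Icc a b)) (hc : ContinuousOn f (Ioo a b)) (hs : s ∈ Ioo a b) :
    HasDerivAt (fun t => ∫ u in a..t, f u) (f s) s :=
  intervalIntegral.integral_hasDerivAt_right
    ((intervalIntegrable_iff_integrableOn_Icc_of_le hs.1.le).2
      (hf.mono_set (Icc_subset_Icc_right hs.2.le)))
    (hc.stronglyMeasurableAtFilter isOpen_Ioo s hs) (hc.continuousAt (Ioo_mem_nhds hs.1 hs.2))

lemma contDiffOn_succ_of_hasDerivAt {z f : ℝ → E} {a b : ℝ} {n : ℕ}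
    (hz : ∀ s ∈ Ioo a b, HasDerivAt z (f s) s) (hf : ContDiffOn ℝ n f (Ioo a b)) :
    ContDiffOn ℝ (n + 1) z (Ioo a b) :=
  (contDiffOn_succ_iff_deriv_of_isOpen isOpen_Ioo).2
    ⟨fun s hs => (hz s hs).differentiableAt.differentiableWithinAt,
      fun h => absurd h (by simp), hf.congr fun s hs => (hz s hs).deriv⟩

end Calculus

section Measurability

lemma aestronglyMeasurable_comp_of_continuousOn {α X Y : Type*} [MeasurableSpace α] {μ : Measure α}
    [TopologicalSpace X] [MeasurableSpace X] [OpensMeasurableSpace X] [TopologicalSpace Y]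
    [TopologicalSpace.PseudoMetrizableSpace Y] [SecondCountableTopologyEither X Y]
    {F : X → Y} {A : Set X} (hF : ContinuousOn F A) (hA : MeasurableSet A) {z : α → X}
    (hz : AEMeasurable z μ) (hzA : ∀ᵐ s ∂μ, z s ∈ A) :
    AEStronglyMeasurable (fun s => F (z s)) μ := by
  have hmap : (Measure.map z μ).restrict A = Measure.map z μ :=
    Measure.restrict_eq_self_of_ae_mem ((ae_map_iff hz hA).2 hzA)
  have hmeas := hF.aestronglyMeasurable (μ := Measure.map z μ) hA
  rw [hmap] at hmeas
  exact hmeas.comp_aemeasurable hz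

lemma memLp_two_restrict_Icc {E : Type*} [NormedAddCommGroup E] {f : ℝ → E} (hf : Continuous f)
    (a b : ℝ) : MemLp f 2 (volume.restrict (Icc a b)) :=
  (memLp_two_iff_integrable_sq_norm hf.aestronglyMeasurable).2
    (hf.norm.pow 2).continuousOn.integrableOn_Icc

end Measurability

section Homogeneous

variable {X E : Type*} [NormedAddCommGroup E] [NormedSpace ℝ E] {f : X × E → ℝ}

lemma eq_norm_sq_mul_of_homogeneous {x : X} (hf : ∀ (c : ℝ) v, f (x, c • v) = c ^ 2 * f (x, v))
    (v : E) : f (x, v) = f (x, ‖v‖⁻¹ • v) * ‖v‖ ^ 2 := by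
  rcases eq_or_ne v 0 with rfl | hv
  · simpa using hf 0 0
  · have := norm_ne_zero_iff.2 hv
    rw [hf]
    field_simp

variable [TopologicalSpace X] [FiniteDimensional ℝ E] {K : Set X}

lemma exists_abs_le_mul_norm_sq (hK : IsCompact K) (hc : ContinuousOn f (K ×ˢ univ))
    (hf : ∀ x ∈ K, ∀ (c : ℝ) v, f (x, c • v) = c ^ 2 * f (x, v)) :
    ∃ C, 0 ≤ C ∧ ∀ x ∈ K, ∀ v, |f (x, v)| ≤ C * ‖v‖ ^ 2 := by
  obtain ⟨C, hC⟩ := (hK.prod (isCompact_closedBall (0 : E) 1)).exists_bound_of_continuousOn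
    (hc.mono (prod_mono_right (subset_univ _)))
  refine ⟨max C 0, le_max_right _ _, fun x hx v => ?_⟩
  rw [eq_norm_sq_mul_of_homogeneous (hf x hx), abs_mul, abs_of_nonneg (sq_nonneg ‖v‖)]
  gcongr
  refine (hC (x, ‖v‖⁻¹ • v) ⟨hx, ?_⟩).trans (le_max_left _ _)
  simpa [norm_smul] using inv_mul_le_one

lemma exists_mul_norm_sq_le (hK : IsCompact K) (hc : ContinuousOn f (K ×ˢ univ))
    (hf : ∀ x ∈ K, ∀ (c : ℝ) v, f (x, c • v) = c ^ 2 * f (x, v))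
    (hpos : ∀ x ∈ K, ∀ v ≠ 0, 0 < f (x, v)) :
    ∃ c > 0, ∀ x ∈ K, ∀ v, c * ‖v‖ ^ 2 ≤ f (x, v) := by
  obtain ⟨c, hc0, hcle⟩ := (hK.prod (isCompact_sphere (0 : E) 1)).exists_forall_le' (a := 0)
    (hc.mono (prod_mono_right (subset_univ _))) fun p hp =>
      hpos p.1 hp.1 p.2 (Metric.ne_of_mem_sphere hp.2 one_ne_zero)
  refine ⟨c, hc0, fun x hx v => ?_⟩
  rcases eq_or_ne v 0 with rfl | hv
  · simpa using (hf x hx 0 0).ge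
  · rw [eq_norm_sq_mul_of_homogeneous (hf x hx)]
    gcongr
    exact hcle (x, ‖v‖⁻¹ • v) ⟨hx, by simp [norm_smul, hv]⟩

end Homogeneous

lemma exists_last_le {f : ℝ → ℝ} {a b c : ℝ} (hf : ContinuousOn f (Icc a b)) (hab : a ≤ b)
    (ha : f a ≤ c) : ∃ u ∈ Icc a b, f u ≤ c ∧ ∀ s ∈ Ioc u b, c < f s := by
  have hK : IsCompact (Icc a b ∩ f ⁻¹' Iic c) :=
    isCompact_Icc.of_isClosed_subset (hf.preimage_isClosed_of_isClosed isClosed_Icc isClosed_Iic)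
      inter_subset_left
  obtain ⟨u, ⟨huI, hu⟩, hmax⟩ := hK.exists_isGreatest ⟨a, left_mem_Icc.2 hab, ha⟩
  refine ⟨u, huI, hu, fun s hs => not_le.1 fun hsc => ?_⟩
  exact hs.1.not_ge (hmax ⟨⟨huI.1.trans hs.1.le, hs.2⟩, hsc⟩)

section Sobolev

variable {x y z : ℝ → Vec N} {a b c d : ℝ}

lemma H1On.of_eq_integral {f : ℝ → Vec N} (hf : MemLp f 2 (volume.restrict (Icc a b)))
    (hz : ∀ t ∈ Icc a b, z t = z a + ∫ s in a..t, f s) : H1On z a b := by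
  have hint : IntegrableOn f (Icc a b) := hf.integrable (by norm_num)
  have hd : deriv z =ᵐ[volume.restrict (Icc a b)] f :=
    (ae_hasDerivAt_of_eq_integral hint hz).mono fun s hs => hs.deriv
  have hf2 := (memLp_two_iff_integrable_sq_norm hf.1).1 hf
  refine ⟨?_, hint.congr hd.symm, hf2.congr (hd.mono fun s hs => by simp only [hs]),
    fun t ht => ?_⟩
  · have hab : IntegrableOn f (uIcc a b) ∨ b < a := by
      rcases lt_or_ge b a with hab | hab
      · exact .inr hab
      · exact .inl (by rwa [uIcc_of_le hab])
    rcases hab with hab | hab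
    · exact (((intervalIntegral.continuousOn_primitive_interval hab).mono
        Icc_subset_uIcc).const_add (z a)).congr hz
    · simp [Icc_eq_empty (not_le.2 hab)]
  · rw [hz t ht]
    congr 1
    rw [intervalIntegral.integral_of_le ht.1, intervalIntegral.integral_of_le ht.1]
    exact integral_congr_ae (ae_restrict_of_ae_restrict_of_subset
      (Ioc_subset_Icc_self.trans (Icc_subset_Icc_right ht.2)) hd.symm)

lemma H1On.memLp_deriv (hx : H1On x a b) : MemLp (deriv x) 2 (volume.restrict (Icc a b)) :=
  (memLp_two_iff_integrable_sq_norm hx.2.1.1).2 hx.2.2.1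

lemma H1On.ae_hasDerivAt (hx : H1On x a b) :
    ∀ᵐ s ∂volume.restrict (Icc a b), HasDerivAt x (deriv x s) s :=
  ae_hasDerivAt_of_eq_integral hx.2.1 hx.2.2.2

lemma H1On.intervalIntegrable_deriv (hx : H1On x a b) (hc : c ∈ Icc a b) (hd : d ∈ Icc a b) :
    IntervalIntegrable (deriv x) volume c d :=
  (hx.2.1.mono_set (uIcc_subset_Icc hc hd)).intervalIntegrable

lemma H1On.sub_eq_integral (hx : H1On x a b) (hc : c ∈ Icc a b) (hd : d ∈ Icc a b) :
    x d - x c = ∫ s in c..d, deriv x s := by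
  have ha : a ∈ Icc a b := left_mem_Icc.2 (hc.1.trans hc.2)
  rw [hx.2.2.2 c hc, hx.2.2.2 d hd, add_sub_add_left_eq_sub,
    intervalIntegral.integral_interval_sub_left (hx.intervalIntegrable_deriv ha hd)
      (hx.intervalIntegrable_deriv ha hc)]

lemma H1On.mono (hx : H1On x a b) (hac : a ≤ c) (hdb : d ≤ b) : H1On x c d := by
  refine .of_eq_integral
    (hx.memLp_deriv.mono_measure (Measure.restrict_mono (Icc_subset_Icc hac hdb) le_rfl))
    fun t ht => ?_
  rw [← hx.sub_eq_integral ⟨hac, ht.1.trans (ht.2.trans hdb)⟩ ⟨hac.trans ht.1, ht.2.trans hdb⟩]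
  abel

lemma H1On.congr (hx : H1On x a b) (h : EqOn y x (Icc a b)) : H1On y a b :=
  .of_eq_integral hx.memLp_deriv fun t ht => by
    rw [h ht, h (left_mem_Icc.2 (ht.1.trans ht.2)), hx.2.2.2 t ht]

lemma H1On.trans (hab : a ≤ b) (hbc : b ≤ c) (hx : H1On x a b) (hy : H1On x b c) :
    H1On x a c := by
  have hmem : MemLp (deriv x) 2 (volume.restrict (Icc a c)) := by
    have h := (hx.2.1.union hy.2.1).1
    have h2 := hx.2.2.1.union hy.2.2.1
    rw [Icc_union_Icc_eq_Icc hab hbc] at h h2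
    exact (memLp_two_iff_integrable_sq_norm h).2 h2
  refine .of_eq_integral hmem fun t ht => ?_
  rcases le_total t b with htb | hbt
  · exact hx.2.2.2 t ⟨ht.1, htb⟩
  · rw [← intervalIntegral.integral_add_adjacent_intervals
      (hx.intervalIntegrable_deriv (left_mem_Icc.2 hab) (right_mem_Icc.2 hab))
      (hy.intervalIntegrable_deriv (left_mem_Icc.2 hbc) ⟨hbt, ht.2⟩), ← add_assoc,
      ← hx.2.2.2 b (right_mem_Icc.2 hab), ← hy.2.2.2 t ⟨hbt, ht.2⟩]

lemma H1On.exists_concat (hab : a ≤ b) (hbc : b ≤ c) (hx : H1On x a b) (hy : H1On y b c)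
    (hxy : x b = y b) : ∃ z, EqOn z x (Icc a b) ∧ EqOn z y (Icc b c) ∧ H1On z a c := by
  have hzx : EqOn ((Iic b).piecewise x y) x (Icc a b) := fun s hs => piecewise_eq_of_mem _ _ _ hs.2
  have hzy : EqOn ((Iic b).piecewise x y) y (Icc b c) := fun s hs => by
    rcases hs.1.eq_or_lt with rfl | h
    · rw [piecewise_eq_of_mem _ _ _ self_mem_Iic, hxy]
    · exact piecewise_eq_of_notMem _ _ _ (notMem_Iic.2 h)
  exact ⟨_, hzx, hzy, (hx.congr hzx).trans hab hbc (hy.congr hzy)⟩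

lemma H1On.add (hx : H1On x a b) (hy : H1On y a b) : H1On (x + y) a b := by
  refine .of_eq_integral (hx.memLp_deriv.add hy.memLp_deriv) fun t ht => ?_
  have ha : a ∈ Icc a b := left_mem_Icc.2 (ht.1.trans ht.2)
  simp only [Pi.add_apply]
  rw [intervalIntegral.integral_add (hx.intervalIntegrable_deriv ha ht)
    (hy.intervalIntegrable_deriv ha ht), hx.2.2.2 t ht, hy.2.2.2 t ht]
  abel

lemma H1On.of_contDiff (hx : ContDiff ℝ 1 x) : H1On x a b := by
  have hc : Continuous (deriv x) := hx.continuous_deriv le_rfl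
  refine .of_eq_integral (f := deriv x) (memLp_two_restrict_Icc hc a b) fun t _ => ?_
  rw [intervalIntegral.integral_deriv_eq_sub'
    x rfl (fun s _ => (hx.differentiable one_ne_zero).differentiableAt) hc.continuousOn]
  abel

lemma H1On.hasDerivAt_of_ae_eq {f : ℝ → Vec N} (hx : H1On x a b)
    (hf : ContinuousOn f (Ioo a b)) (hae : deriv x =ᵐ[volume.restrict (Icc a b)] f) {s : ℝ}
    (hs : s ∈ Ioo a b) : HasDerivAt x (f s) s := by
  have hprim := hasDerivAt_primitive (hx.2.1.congr hae) hf hs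
  refine (hprim.const_add (x a)).congr_of_eventuallyEq ?_
  filter_upwards [Icc_mem_nhds hs.1 hs.2] with t ht
  rw [hx.2.2.2 t ht, intervalIntegral.integral_of_le ht.1, intervalIntegral.integral_of_le ht.1]
  exact congrArg _ (integral_congr_ae (ae_restrict_of_ae_restrict_of_subset
      (Ioc_subset_Icc_self.trans (Icc_subset_Icc_right ht.2)) hae))

lemma memLp_two_rpow {α : ℝ} (hα : -(1 / 2) < α) (b : ℝ) :
    MemLp (fun s : ℝ => s ^ α) 2 (volume.restrict (Icc 0 b)) := by
  have hmeas : AEStronglyMeasurable (fun s : ℝ => s ^ α) (volume.restrict (Icc 0 b)) :=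
    (measurable_id.pow_const α).aestronglyMeasurable
  rw [memLp_two_iff_integrable_sq_norm hmeas]
  rcases lt_or_ge b 0 with hb | hb
  · simp [Icc_eq_empty (not_le.2 hb)]
  have hint : IntegrableOn (fun s : ℝ => s ^ (α * 2)) (Icc 0 b) :=
    (intervalIntegrable_iff_integrableOn_Icc_of_le hb).1
      (intervalIntegral.intervalIntegrable_rpow' (by linarith))
  refine hint.congr ((ae_restrict_iff' measurableSet_Icc).2 (Eventually.of_forall fun s hs => ?_))
  simp only [Real.norm_eq_abs, sq_abs, Real.rpow_mul hs.1, Real.rpow_two]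

lemma exists_H1On_extension {C α : ℝ} (hC : 0 ≤ C) (hα : 0 ≤ α) (hα2 : α < 1 / 2)
    (h : ∀ s t, 0 < s → s ≤ t → t ≤ b → ‖z t - z s‖ ≤ C * s ^ (-α) * (t - s)) :
    ∃ x, H1On x 0 b ∧ EqOn x z (Ioc 0 b) := by
  have hlip : ∀ r, 0 < r → LipschitzOnWith (C * r ^ (-α)).toNNReal z (Icc r b) := by
    refine fun r hr => lipschitzOnWith_Icc_of_norm_sub_le fun s t hrs hst htb => ?_
    rw [Real.coe_toNNReal _ (by positivity)]
    refine (h s t (hr.trans_le hrs) hst htb).trans ?_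
    have hrpow := Real.rpow_le_rpow_of_nonpos hr hrs (neg_nonpos.2 hα)
    have := sub_nonneg.2 hst
    gcongr
  have hbound : ∀ s ∈ Ioo 0 b, ‖deriv z s‖ ≤ C * 2 ^ α * ‖s ^ (-α)‖ := fun s hs => by
    refine (norm_deriv_le_of_lipschitzOn (Icc_mem_nhds (half_lt_self hs.1) hs.2)
      (hlip _ (half_pos hs.1))).trans_eq ?_
    have hs0 : 0 ≤ s := hs.1.le
    rw [Real.coe_toNNReal _ (by positivity), Real.norm_of_nonneg (by positivity),
      Real.div_rpow hs0 zero_le_two, Real.rpow_neg zero_le_two]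
    field_simp
  have hmem : MemLp (deriv z) 2 (volume.restrict (Icc 0 b)) :=
    (memLp_two_rpow (by linarith) b).of_le_mul (stronglyMeasurable_deriv z).aestronglyMeasurable
      (ae_restrict_Icc_iff.2 (Eventually.of_forall hbound))
  have hII : ∀ s ∈ Icc 0 b, ∀ t ∈ Icc 0 b, IntervalIntegrable (deriv z) volume s t :=
    fun s hs t ht => (IntegrableOn.mono_set (hmem.integrable (by norm_num))
      (uIcc_subset_Icc hs ht)).intervalIntegrable
  refine ⟨fun t => z b - ∫ s in t..b, deriv z s, .of_eq_integral hmem fun t ht => ?_,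
    fun t ht => ?_⟩
  · have h0b : 0 ≤ b := ht.1.trans ht.2
    rw [← intervalIntegral.integral_add_adjacent_intervals
      (hII 0 (left_mem_Icc.2 h0b) t ht) (hII t ht b (right_mem_Icc.2 h0b))]
    abel
  · simp only [integral_deriv_of_lipschitzOnWith ht.2 (hlip t ht.1), sub_sub_cancel]

end Sobolev

section DuBoisReymond

variable {E : Type*} [NormedAddCommGroup E] [NormedSpace ℝ E] {a b : ℝ}

lemma integral_deriv_smul_primitive [CompleteSpace E] {φ : ℝ → ℝ} {P : ℝ → E}
    (hφ : ContDiff ℝ 1 φ) (hP : IntervalIntegrable P volume a b) :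
    ∫ s in a..b, deriv φ s • ∫ u in a..s, P u
      = φ b • (∫ u in a..b, P u) - ∫ s in a..b, φ s • P s := by
  have hφ' : Continuous (deriv φ) := hφ.continuous_deriv le_rfl
  have hA : ContinuousOn (fun s => ∫ u in a..s, P u) (uIcc a b) :=
    intervalIntegral.continuousOn_primitive_interval' hP left_mem_uIcc
  have hφA : IntervalIntegrable (fun s => deriv φ s • ∫ u in a..s, P u) volume a b :=
    (hφ'.continuousOn.smul hA).intervalIntegrable
  have hφP : IntervalIntegrable (fun s => φ s • P s) volume a b :=
    hP.continuousOn_smul hφ.continuous.continuousOn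
  refine (SeparatingDual.eq_iff_forall_dual_eq (R := ℝ)).2 fun ℓ => ?_
  have hℓP : IntervalIntegrable (fun s => ℓ (P s)) volume a b := ⟨ℓ.integrable_comp hP.1,
    ℓ.integrable_comp hP.2⟩
  have hac := hℓP.absolutelyContinuousOnInterval_intervalIntegral (c := a) left_mem_uIcc
  have hparts := (hφ.contDiffOn (s := uIcc a b)).absolutelyContinuousOnInterval
    |>.integral_mul_deriv_eq_deriv_mul hac
  have hd : ∫ s in a..b, φ s * deriv (fun s => ∫ u in a..s, ℓ (P u)) s
      = ∫ s in a..b, φ s * ℓ (P s) := intervalIntegral.integral_congr_ae <| by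
    filter_upwards [hℓP.ae_hasDerivAt_integral] with s hs hsI
    rw [(hs (uIoc_subset_uIcc hsI) a left_mem_uIcc).deriv]
  have hAℓ : ∀ s ∈ uIcc a b, ℓ (∫ u in a..s, P u) = ∫ u in a..s, ℓ (P u) := fun s hs =>
    (ℓ.intervalIntegral_comp_comm (hP.mono_set (uIcc_subset_uIcc_left hs))).symm
  rw [hd] at hparts
  rw [map_sub, map_smul, hAℓ b right_mem_uIcc, ← ℓ.intervalIntegral_comp_comm hφA,
    ← ℓ.intervalIntegral_comp_comm hφP]
  simp only [map_smul, smul_eq_mul, hparts]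
  rw [intervalIntegral.integral_congr (g := fun s => deriv φ s * ∫ u in a..s, ℓ (P u))
    fun s hs => by simp only [hAℓ s hs]]
  simp

lemma exists_contDiff_deriv_eq {ψ : ℝ → ℝ} (hψ : ContDiff ℝ (⊤ : ℕ∞) ψ)
    (hs : tsupport ψ ⊆ Ioo a b) (h0 : ∫ s in a..b, ψ s = 0) :
    ∃ φ : ℝ → ℝ, ContDiff ℝ (⊤ : ℕ∞) φ ∧ tsupport φ ⊆ Ioo a b ∧ deriv φ = ψ := by
  have hder : deriv (fun s => ∫ u in a..s, ψ u) = ψ :=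
    funext fun s => hψ.continuous.deriv_integral _ _ _
  obtain ⟨c, d, hac, hdb, hsub⟩ : ∃ c d, a < c ∧ d < b ∧ tsupport ψ ⊆ Icc c d := by
    rcases (tsupport ψ).eq_empty_or_nonempty with hempty | hne
    · exact ⟨a + 1, b - 1, by simp, by simp, by simp [hempty]⟩
    · have hc : IsCompact (tsupport ψ) :=
        isCompact_Icc.of_isClosed_subset (isClosed_tsupport ψ) (hs.trans Ioo_subset_Icc_self)
      exact ⟨_, _, (hs (hc.sInf_mem hne)).1, (hs (hc.sSup_mem hne)).2,
        subset_Icc_csInf_csSup hc.bddBelow hc.bddAbove⟩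
  have hzero : ∀ t s, (∀ u ∈ uIcc t s, u ∉ Icc c d) → ∫ u in t..s, ψ u = 0 := fun t s h => by
    rw [intervalIntegral.integral_congr (g := fun _ => 0) fun u hu =>
      image_eq_zero_of_notMem_tsupport fun hu' => h u hu (hsub hu'), intervalIntegral.integral_zero]
  refine ⟨fun s => ∫ u in a..s, ψ u, ?_, ?_, hder⟩
  · refine contDiff_infty_iff_deriv.2 ⟨fun s => ?_, by rwa [hder]⟩
    exact (hψ.continuous.integral_hasStrictDerivAt a s).hasDerivAt.differentiableAt
  · refine (closure_minimal (fun s hsφ => ?_) isClosed_Icc).trans (Icc_subset_Ioo hac hdb)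
    by_contra hsI
    rcases not_and_or.1 hsI with hsc | hsd
    · exact hsφ (hzero a s fun u hu huI => (max_lt hac (not_le.1 hsc)).not_ge (huI.1.trans hu.2))
    · have hsplit := intervalIntegral.integral_add_adjacent_intervals
        (hψ.continuous.intervalIntegrable (μ := volume) a s) (hψ.continuous.intervalIntegrable s b)
      rw [h0, hzero s b fun u hu huI => (lt_min (not_le.1 hsd) hdb).not_ge (hu.1.trans huI.2),
        add_zero] at hsplit
      exact hsφ hsplit

lemma intervalIntegral_eq_integral_of_tsupport {f : ℝ → E} (h : tsupport f ⊆ Ioo a b) :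
    ∫ s in a..b, f s = ∫ s, f s :=
  intervalIntegral.integral_eq_integral_of_support_subset
    ((subset_tsupport f).trans (h.trans Ioo_subset_Ioc_self))

lemma exists_test_function_integral_eq_one (hab : a < b) :
    ∃ ψ : ℝ → ℝ, ContDiff ℝ (⊤ : ℕ∞) ψ ∧ tsupport ψ ⊆ Ioo a b ∧ ∫ s in a..b, ψ s = 1 := by
  let β : ContDiffBump ((a + b) / 2) := ⟨(b - a) / 8, (b - a) / 4, by linarith, by linarith⟩
  have hβ : tsupport (β.normed volume) ⊆ Ioo a b := by
    rw [β.tsupport_normed_eq, Real.closedBall_eq_Icc]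
    refine Icc_subset_Ioo ?_ ?_ <;> simp only [β] <;> linarith
  refine ⟨β.normed volume, β.contDiff_normed, hβ, ?_⟩
  rw [intervalIntegral_eq_integral_of_tsupport hβ, β.integral_normed]

lemma ae_eq_const_of_integral_deriv_smul_eq_zero [CompleteSpace E] (hab : a < b) {G : ℝ → E}
    (hG : IntegrableOn G (Icc a b))
    (h : ∀ φ : ℝ → ℝ, ContDiff ℝ (⊤ : ℕ∞) φ → tsupport φ ⊆ Ioo a b →
      ∫ s in a..b, deriv φ s • G s = 0) :
    ∃ c, G =ᵐ[volume.restrict (Icc a b)] fun _ => c := by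
  obtain ⟨ψ₀, hψ₀, hsψ₀, hψ₀1⟩ := exists_test_function_integral_eq_one hab
  have hGi : IntervalIntegrable G volume a b :=
    (intervalIntegrable_iff_integrableOn_Icc_of_le hab.le).2 hG
  have hψG : ∀ ψ : ℝ → ℝ, Continuous ψ → IntervalIntegrable (fun s => ψ s • G s) volume a b :=
    fun ψ hψ => hGi.continuousOn_smul hψ.continuousOn
  set c := ∫ s in a..b, ψ₀ s • G s
  have hae : ∀ᵐ s : ℝ, s ∈ Ioo a b → G s - c = 0 := by
    refine isOpen_Ioo.ae_eq_zero_of_integral_contDiff_smul_eq_zero ?_ fun ψ hψ _ hsψ => ?_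
    · exact ((hG.sub continuous_const.integrableOn_Icc).mono_set
        Ioo_subset_Icc_self).locallyIntegrableOn
    have hψi := hψ.continuous.intervalIntegrable (μ := volume) a b
    have hψ₀i := hψ₀.continuous.intervalIntegrable (μ := volume) a b
    obtain ⟨φ, hφ, hsφ, hφψ⟩ := exists_contDiff_deriv_eq (a := a) (b := b)
      (hψ.sub (contDiff_const.mul hψ₀ : ContDiff ℝ _ fun s => (∫ u in a..b, ψ u) * ψ₀ s))
      ((tsupport_sub _ _).trans (union_subset hsψ (tsupport_mul_subset_right.trans hsψ₀)))
      (by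
        rw [intervalIntegral.integral_sub hψi (hψ₀i.const_mul _),
          intervalIntegral.integral_const_mul, hψ₀1, mul_one, sub_self])
    have hzero := h φ hφ hsφ
    simp only [hφψ, sub_smul, mul_smul] at hzero
    have hψ₀G : IntervalIntegrable (fun s => (∫ u in a..b, ψ u) • ψ₀ s • G s) volume a b :=
      (hψG ψ₀ hψ₀.continuous).smul _
    rw [intervalIntegral.integral_sub (hψG ψ hψ.continuous) hψ₀G,
      intervalIntegral.integral_smul] at hzero
    rw [← intervalIntegral_eq_integral_of_tsupport ((tsupport_smul_subset_left _ _).trans hsψ)]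
    have hψc : IntervalIntegrable (fun s => ψ s • c) volume a b :=
      (hψ.continuous.smul continuous_const).intervalIntegrable _ _
    simp only [smul_sub]
    rw [intervalIntegral.integral_sub (hψG ψ hψ.continuous) hψc,
      intervalIntegral.integral_smul_const, hzero]
  exact ⟨c, ae_restrict_Icc_iff.2 (hae.mono fun s hs hsI => sub_eq_zero.1 (hs hsI))⟩

lemma du_bois_reymond [CompleteSpace E] (hab : a < b) {P R : ℝ → E}
    (hP : IntegrableOn P (Icc a b)) (hR : IntegrableOn R (Icc a b))
    (h : ∀ φ : ℝ → ℝ, ContDiff ℝ (⊤ : ℕ∞) φ → tsupport φ ⊆ Ioo a b →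
      ∫ s in a..b, (φ s • P s + deriv φ s • R s) = 0) :
    ∃ c, R =ᵐ[volume.restrict (Icc a b)] fun s => c + ∫ u in a..s, P u := by
  have hPi := (intervalIntegrable_iff_integrableOn_Icc_of_le hab.le).2 hP
  have hRi := (intervalIntegrable_iff_integrableOn_Icc_of_le hab.le).2 hR
  have hA : ContinuousOn (fun s => ∫ u in a..s, P u) (uIcc a b) :=
    intervalIntegral.continuousOn_primitive_interval' hPi left_mem_uIcc
  have hAi : IntegrableOn (fun s => ∫ u in a..s, P u) (Icc a b) := by
    rw [uIcc_of_le hab.le] at hA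
    exact hA.integrableOn_Icc
  obtain ⟨c, hc⟩ := ae_eq_const_of_integral_deriv_smul_eq_zero hab (hR.sub hAi)
    fun φ hφ hsφ => by
      have hφ1 : ContDiff ℝ 1 φ := hφ.of_le (by exact_mod_cast le_top)
      have hφ' := (hφ1.continuous_deriv le_rfl).continuousOn (s := uIcc a b)
      have hb : φ b = 0 := image_eq_zero_of_notMem_tsupport fun hb => (hsφ hb).2.false
      have hsum := h φ hφ hsφ
      rw [intervalIntegral.integral_add (hPi.continuousOn_smul hφ1.continuous.continuousOn)
        (hRi.continuousOn_smul hφ')] at hsum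
      have hAφ : IntervalIntegrable (fun s => deriv φ s • ∫ u in a..s, P u) volume a b :=
        (hφ'.smul hA).intervalIntegrable
      simp only [Pi.sub_apply, smul_sub]
      rw [intervalIntegral.integral_sub (hRi.continuousOn_smul hφ') hAφ,
        integral_deriv_smul_primitive hφ1 hPi, hb, zero_smul,
        zero_sub, sub_neg_eq_add, add_comm, hsum]
  exact ⟨c, hc.mono fun s hs => sub_eq_iff_eq_add.1 hs⟩

end DuBoisReymond

namespace Setting

variable (S : Setting N) {x p : Vec N}

section Metric

lemma mem_U (hx : S.V x ≤ S.E) : x ∈ S.U := S.hsub hx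

lemma isOpen_well : IsOpen {x | S.V x < S.E} := by
  have hwell : {x | S.V x < S.E} = S.U ∩ S.V ⁻¹' Iio S.E :=
    Set.ext fun x => ⟨fun hx => ⟨S.mem_U (le_of_lt hx), hx⟩, fun hx => hx.2⟩
  rw [hwell]
  exact S.hVC.continuousOn.isOpen_inter_preimage S.hU isOpen_Iio

/-- The metric at `x` as a bounded bilinear form on the ambient space. -/
def metricForm (x : Vec N) : Vec N →L[ℝ] Vec N →L[ℝ] ℝ :=
  ∑ i, ∑ j, S.g x i j • (ContinuousLinearMap.proj (R := ℝ) (φ := fun _ : Fin N => ℝ) i).smulRight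
    (ContinuousLinearMap.proj (R := ℝ) (φ := fun _ : Fin N => ℝ) j)

@[simp]
lemma metricForm_apply (x v w : Vec N) : S.metricForm x v w = S.prod x v w := by
  simp [metricForm, prod, gP, mul_assoc]

lemma contDiffOn_metricForm : ContDiffOn ℝ 3 S.metricForm S.U :=
  contDiffOn_clm_apply.2 fun v => contDiffOn_clm_apply.2 fun w => by
    simp only [metricForm_apply, prod, gP]
    exact ContDiffOn.sum fun i _ => ContDiffOn.sum fun j _ =>
      ((S.hgC i j).mul contDiffOn_const).mul contDiffOn_const

lemma prod_comm (hx : x ∈ S.U) (v w : Vec N) : S.prod x v w = S.prod x w v := by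
  simp only [prod, gP]
  rw [Finset.sum_comm]
  exact Finset.sum_congr rfl fun i _ => Finset.sum_congr rfl fun j _ => by
    rw [S.hgsymm x hx j i, mul_right_comm]

lemma prod_smul_smul (x v : Vec N) (c : ℝ) :
    S.prod x (c • v) (c • v) = c ^ 2 * S.prod x v v := by
  simp only [← metricForm_apply, map_smul, _root_.smul_apply, smul_eq_mul]
  ring

lemma prod_self_nonneg (hx : x ∈ S.U) (v : Vec N) : 0 ≤ S.prod x v v := by
  rcases eq_or_ne v 0 with rfl | hv
  · simp [← metricForm_apply]
  · exact (S.hgpos x hx v hv).le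

lemma prod_eq_dotProduct (x v w : Vec N) : S.prod x v w = v ⬝ᵥ (S.g x *ᵥ w) := by
  simp only [prod, gP, dotProduct, mulVec, Finset.mul_sum]
  exact Finset.sum_congr rfl fun i _ => Finset.sum_congr rfl fun j _ => by ring

lemma posDef_g (hx : x ∈ S.U) : (S.g x).PosDef := by
  refine .of_dotProduct_mulVec_pos (Matrix.ext fun i j => S.hgsymm x hx j i) fun v hv => ?_
  rw [star_trivial, ← prod_eq_dotProduct]
  exact S.hgpos x hx v hv

lemma exists_prod_self_eq_norm_sq (hx : x ∈ S.U) :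
    ∃ (m : ℕ) (A : Vec N →L[ℝ] EuclideanSpace ℝ (Fin m)), ∀ v, S.prod x v v = ‖A v‖ ^ 2 := by
  obtain ⟨m, B, hB⟩ := Matrix.posSemidef_iff_eq_sum_vecMulVec.1 (S.posDef_g hx).posSemidef
  refine ⟨m, LinearMap.toContinuousLinearMap
    ((WithLp.linearEquiv 2 ℝ (Fin m → ℝ)).symm.toLinearMap ∘ₗ (Matrix.of B).mulVecLin),
    fun v => ?_⟩
  rw [EuclideanSpace.real_norm_sq_eq, prod_eq_dotProduct, hB]
  simp [Matrix.sum_mulVec, sum_dotProduct, smul_dotProduct, vecMulVec_mulVec, mulVec,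
    dotProduct_comm v, sq]

end Metric

section Lagrangian

/-- The energy density `½ (E - V(x)) g_x(v, v)` of the Jacobi metric, as a function on the tangent
bundle. -/
def lagrangian (z : Vec N × Vec N) : ℝ := (1 / 2) * (S.E - S.V z.1) * S.prod z.1 z.2 z.2

/-- The square root of `E - V(x)`: up to constants, the ratio of the Jacobi norm to the ambient
norm at `x`. -/
def depth (x : Vec N) : ℝ := √(S.E - S.V x)

/-- The norm of the tangent vector `v` at `x` in the Jacobi metric. -/
def jacobiNorm (x v : Vec N) : ℝ := √(S.lagrangian (x, v))

lemma contDiffOn_lagrangian : ContDiffOn ℝ 2 S.lagrangian (S.U ×ˢ univ) := by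
  have hV : ContDiffOn ℝ 2 (fun z : Vec N × Vec N => S.V z.1) (S.U ×ˢ univ) :=
    S.hVC.comp contDiffOn_fst fun z hz => hz.1
  have hg : ContDiffOn ℝ 2 (fun z : Vec N × Vec N => S.metricForm z.1) (S.U ×ˢ univ) :=
    (S.contDiffOn_metricForm.of_le (by norm_num)).comp contDiffOn_fst fun z hz => hz.1
  have hmain := (contDiffOn_const (c := (1 / 2 : ℝ))).mul ((contDiffOn_const (c := S.E)).sub hV)
    |>.mul ((hg.clm_apply contDiffOn_snd).clm_apply contDiffOn_snd)
  exact hmain.congr fun z _ => by simp [lagrangian]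

lemma lagrangian_smul (x v : Vec N) (c : ℝ) :
    S.lagrangian (x, c • v) = c ^ 2 * S.lagrangian (x, v) := by
  simp only [lagrangian, prod_smul_smul]
  ring

lemma lagrangian_nonneg (hx : S.V x ≤ S.E) (v : Vec N) : 0 ≤ S.lagrangian (x, v) :=
  mul_nonneg (mul_nonneg one_half_pos.le (sub_nonneg.2 hx)) (S.prod_self_nonneg (S.mem_U hx) v)

lemma lagrangian_pos (hx : S.V x < S.E) {v : Vec N} (hv : v ≠ 0) : 0 < S.lagrangian (x, v) :=
  mul_pos (mul_pos one_half_pos (sub_pos.2 hx)) (S.hgpos x (S.mem_U hx.le) v hv)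

lemma depth_sq (hx : S.V x ≤ S.E) : S.depth x ^ 2 = S.E - S.V x := Real.sq_sqrt (sub_nonneg.2 hx)

lemma depth_nonneg (x : Vec N) : 0 ≤ S.depth x := Real.sqrt_nonneg _

lemma depth_pos : 0 < S.depth x ↔ S.V x < S.E := Real.sqrt_pos.trans sub_pos

lemma continuousOn_depth : ContinuousOn S.depth S.U :=
  (continuousOn_const.sub S.hVC.continuousOn).sqrt

lemma jacobiNorm_nonneg (x v : Vec N) : 0 ≤ S.jacobiNorm x v := Real.sqrt_nonneg _

lemma jacobiNorm_smul (x v : Vec N) (c : ℝ) :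
    S.jacobiNorm x (c • v) = |c| * S.jacobiNorm x v := by
  rw [jacobiNorm, lagrangian_smul, Real.sqrt_mul (sq_nonneg c), Real.sqrt_sq_eq_abs, jacobiNorm]

lemma jacobiNorm_sq (hx : S.V x ≤ S.E) (v : Vec N) : S.jacobiNorm x v ^ 2 = S.lagrangian (x, v) :=
  Real.sq_sqrt (S.lagrangian_nonneg hx v)

lemma continuousOn_jacobiNorm :
    ContinuousOn (fun z : Vec N × Vec N => S.jacobiNorm z.1 z.2) (S.U ×ˢ univ) :=
  S.contDiffOn_lagrangian.continuousOn.sqrt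

lemma exists_jacobiNorm_bounds : ∃ k > 0, ∃ K > 0, ∀ x, S.V x ≤ S.E → ∀ v,
    k * S.depth x * ‖v‖ ≤ S.jacobiNorm x v ∧ S.jacobiNorm x v ≤ K * S.depth x * ‖v‖ := by
  set f : Vec N × Vec N → ℝ := fun z => S.prod z.1 z.2 z.2
  have hf : ContinuousOn f ({x | S.V x ≤ S.E} ×ˢ univ) := by
    have hg : ContinuousOn (fun z : Vec N × Vec N => S.metricForm z.1)
        ({x | S.V x ≤ S.E} ×ˢ univ) :=
      S.contDiffOn_metricForm.continuousOn.comp continuousOn_fst fun z hz => S.mem_U hz.1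
    simpa only [metricForm_apply] using
      (hg.clm_apply continuousOn_snd).clm_apply continuousOn_snd
  have hhom : ∀ x ∈ {x | S.V x ≤ S.E}, ∀ (c : ℝ) v, f (x, c • v) = c ^ 2 * f (x, v) :=
    fun x _ c v => S.prod_smul_smul x v c
  obtain ⟨l, hl, hle⟩ := exists_mul_norm_sq_le S.hcomp hf hhom fun x hx => S.hgpos x (S.mem_U hx)
  obtain ⟨L, hL, hLe⟩ := exists_abs_le_mul_norm_sq S.hcomp hf hhom
  refine ⟨√(l / 2), by positivity, √((L + 1) / 2), by positivity, fun x hx v => ?_⟩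
  have hsq : ∀ c, 0 ≤ c → √(c / 2) * S.depth x * ‖v‖
      = √(1 / 2 * (S.E - S.V x) * (c * ‖v‖ ^ 2)) := fun c hc => by
    have := sub_nonneg.2 hx
    rw [← Real.sqrt_sq (norm_nonneg v), depth, ← Real.sqrt_mul (by positivity),
      ← Real.sqrt_mul (by positivity), Real.sqrt_sq (norm_nonneg v)]
    ring_nf
  have hgap : 0 ≤ 1 / 2 * (S.E - S.V x) := mul_nonneg one_half_pos.le (sub_nonneg.2 hx)
  rw [hsq l hl.le, hsq (L + 1) (by linarith)]
  refine ⟨Real.sqrt_le_sqrt (mul_le_mul_of_nonneg_left (hle x hx v) hgap),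
    Real.sqrt_le_sqrt (mul_le_mul_of_nonneg_left ((le_abs_self _).trans ?_) hgap)⟩
  exact (hLe x hx v).trans (by gcongr; linarith)

lemma eventually_jacobiNorm_le (hp : S.V p < S.E) {η : ℝ} (hη : 0 < η) :
    ∀ᶠ y in 𝓝 p, ∀ v, S.jacobiNorm p v ≤ (1 + η) * S.jacobiNorm y v := by
  have hc : ∀ v, ContinuousAt S.lagrangian (p, v) := fun v =>
    S.contDiffOn_lagrangian.continuousOn.continuousAt
      (prod_mem_nhds (S.hU.mem_nhds (S.mem_U hp.le)) univ_mem)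
  have hsphere : ∀ᶠ y in 𝓝 p, ∀ v ∈ Metric.sphere (0 : Vec N) 1,
      S.lagrangian (p, v) < (1 + η) ^ 2 * S.lagrangian (y, v) := by
    refine (isCompact_sphere (0 : Vec N) 1).eventually_forall_of_forall_eventually fun v hv => ?_
    have hpv : ContinuousAt (fun z : Vec N × Vec N => S.lagrangian (p, z.2)) (p, v) :=
      (hc v).comp (f := fun z : Vec N × Vec N => (p, z.2)) (x := (p, v)) (by fun_prop)
    refine hpv.eventually_lt ((hc v).const_mul _) ?_
    exact lt_mul_of_one_lt_left (S.lagrangian_pos hp (Metric.ne_of_mem_sphere hv one_ne_zero))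
      (one_lt_pow₀ (by linarith) two_ne_zero)
  filter_upwards [hsphere] with y hy v
  rw [jacobiNorm, jacobiNorm, ← Real.sqrt_sq (show 0 ≤ 1 + η by positivity),
    ← Real.sqrt_mul (by positivity)]
  refine Real.sqrt_le_sqrt ?_
  rcases eq_or_ne v 0 with rfl | hv
  · simp [lagrangian, ← metricForm_apply]
  · rw [eq_norm_sq_mul_of_homogeneous fun c v => S.lagrangian_smul p v c,
      eq_norm_sq_mul_of_homogeneous fun c v => S.lagrangian_smul y v c, ← mul_assoc]
    gcongr
    exact (hy _ (by simp [norm_smul, hv])).le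

lemma jacobiNorm_integral_le (hp : S.V p ≤ S.E) {f : ℝ → Vec N} {a b : ℝ} (hab : a ≤ b)
    (hf : IntervalIntegrable f volume a b) :
    S.jacobiNorm p (∫ s in a..b, f s) ≤ ∫ s in a..b, S.jacobiNorm p (f s) := by
  obtain ⟨m, A, hA⟩ := S.exists_prod_self_eq_norm_sq (S.mem_U hp)
  have hnorm : ∀ v, S.jacobiNorm p v = √(1 / 2 * (S.E - S.V p)) * ‖A v‖ := fun v => by
    rw [jacobiNorm, lagrangian, hA, Real.sqrt_mul' _ (sq_nonneg _), Real.sqrt_sq (norm_nonneg _)]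
  simp only [hnorm, intervalIntegral.integral_const_mul, ← A.intervalIntegral_comp_comm hf]
  gcongr
  exact intervalIntegral.norm_integral_le_integral_norm hab

end Lagrangian

end Setting

namespace Setting

variable {S : Setting N} {x y : ℝ → Vec N} {p : Vec N} {a b c d : ℝ}

variable (S) in
/-- `x` is an `H¹` curve on `[a, b]` that stays in the closed well `V ≤ E`. -/
structure IsWellCurve (x : ℝ → Vec N) (a b : ℝ) : Prop where
  h1On : H1On x a b
  le : ∀ s ∈ Icc a b, S.V (x s) ≤ S.E

variable (S) in
/-- The Jacobi length of the restriction of `x` to `[a, b]`; `S.LV x` is the case of `[0, 1]`. -/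
def arcLen (x : ℝ → Vec N) (a b : ℝ) : ℝ := ∫ s in a..b, S.jacobiNorm (x s) (deriv x s)

lemma LV_eq_arcLen (x : ℝ → Vec N) : S.LV x = S.arcLen x 0 1 := rfl

lemma arcLen_nonneg (hab : a ≤ b) : 0 ≤ S.arcLen x a b :=
  intervalIntegral.integral_nonneg hab fun _ _ => S.jacobiNorm_nonneg _ _

lemma arcLen_congr (h : EqOn x y (Icc a b)) (hab : a ≤ b) : S.arcLen x a b = S.arcLen y a b := by
  refine intervalIntegral.integral_congr_ae ?_
  have hb : ∀ᵐ s : ℝ, s ≠ b := by simp [ae_iff]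
  filter_upwards [hb] with s hsb hs
  rw [uIoc_of_le hab] at hs
  have hI : Icc a b ∈ 𝓝 s := Icc_mem_nhds hs.1 (hs.2.lt_of_ne hsb)
  have hxy : x =ᶠ[𝓝 s] y := eventually_of_mem hI h
  rw [hxy.deriv_eq, hxy.eq_of_nhds]

namespace IsWellCurve

lemma mem_U (hx : S.IsWellCurve x a b) {s : ℝ} (hs : s ∈ Icc a b) : x s ∈ S.U :=
  S.mem_U (hx.le s hs)

lemma mono (hx : S.IsWellCurve x a b) (hac : a ≤ c) (hdb : d ≤ b) : S.IsWellCurve x c d :=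
  ⟨hx.h1On.mono hac hdb, fun s hs => hx.le s (Icc_subset_Icc hac hdb hs)⟩

lemma integrableOn_jacobiNorm (hx : S.IsWellCurve x a b) :
    IntegrableOn (fun s => S.jacobiNorm (x s) (deriv x s)) (Icc a b) := by
  obtain ⟨k, -, K, hK, h⟩ := S.exists_jacobiNorm_bounds
  obtain ⟨D, hD⟩ := S.hcomp.exists_bound_of_continuousOn (S.continuousOn_depth.mono S.hsub)
  have hmem : ∀ᵐ s ∂volume.restrict (Icc a b), (x s, deriv x s) ∈ S.U ×ˢ univ :=
    (ae_restrict_iff' measurableSet_Icc).2 (Eventually.of_forall fun s hs =>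
      ⟨hx.mem_U hs, mem_univ _⟩)
  refine Integrable.mono' (hx.h1On.2.1.norm.const_mul (K * D))
    (aestronglyMeasurable_comp_of_continuousOn S.continuousOn_jacobiNorm
      (S.hU.prod isOpen_univ).measurableSet ?_ hmem) ?_
  · exact (hx.h1On.1.aemeasurable measurableSet_Icc).prodMk (measurable_deriv x).aemeasurable
  · refine (ae_restrict_iff' measurableSet_Icc).2 (Eventually.of_forall fun s hs => ?_)
    rw [Real.norm_of_nonneg (S.jacobiNorm_nonneg _ _)]
    refine (h _ (hx.le s hs) _).2.trans ?_
    gcongr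
    exact (le_abs_self _).trans (hD _ (hx.le s hs))

lemma intervalIntegrable_jacobiNorm (hx : S.IsWellCurve x a b) (hc : c ∈ Icc a b)
    (hd : d ∈ Icc a b) :
    IntervalIntegrable (fun s => S.jacobiNorm (x s) (deriv x s)) volume c d :=
  (hx.integrableOn_jacobiNorm.mono_set (uIcc_subset_Icc hc hd)).intervalIntegrable

lemma arcLen_add (hx : S.IsWellCurve x a b) (hc : c ∈ Icc a b) :
    S.arcLen x a c + S.arcLen x c b = S.arcLen x a b :=
  have hab := hc.1.trans hc.2
  intervalIntegral.integral_add_adjacent_intervals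
    (hx.intervalIntegrable_jacobiNorm (left_mem_Icc.2 hab) hc)
    (hx.intervalIntegrable_jacobiNorm hc (right_mem_Icc.2 hab))

lemma arcLen_mono (hx : S.IsWellCurve x a b) (hac : a ≤ c) (hcd : c ≤ d) (hdb : d ≤ b) :
    S.arcLen x c d ≤ S.arcLen x a b := by
  rw [← hx.arcLen_add ⟨hac, hcd.trans hdb⟩,
    ← (hx.mono hac le_rfl).arcLen_add ⟨hcd, hdb⟩]
  linarith [arcLen_nonneg (S := S) (x := x) hac, arcLen_nonneg (S := S) (x := x) hdb]

lemma continuousOn_arcLen (hx : S.IsWellCurve x a b) (hab : a ≤ b) :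
    ContinuousOn (S.arcLen x a) (Icc a b) := by
  have h := intervalIntegral.continuousOn_primitive_interval
    (by rw [uIcc_of_le hab]; exact hx.integrableOn_jacobiNorm)
  rwa [uIcc_of_le hab] at h

end IsWellCurve

lemma exists_norm_sub_le_arcLen (S : Setting N) : ∃ k > 0, ∀ {x a b c}, S.IsWellCurve x a b →
    a ≤ b → 0 ≤ c → (∀ s ∈ Ioc a b, c ≤ S.depth (x s)) → k * c * ‖x b - x a‖ ≤ S.arcLen x a b := by
  obtain ⟨k, hk, K, _, h⟩ := S.exists_jacobiNorm_bounds
  refine ⟨k, hk, fun {x a b c} hx hab hc0 hc => ?_⟩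
  have ha := left_mem_Icc.2 hab
  have hb := right_mem_Icc.2 hab
  calc k * c * ‖x b - x a‖ ≤ k * c * ∫ s in a..b, ‖deriv x s‖ := by
        rw [hx.h1On.sub_eq_integral ha hb]
        gcongr
        exact intervalIntegral.norm_integral_le_integral_norm hab
    _ = ∫ s in a..b, k * c * ‖deriv x s‖ := (intervalIntegral.integral_const_mul _ _).symm
    _ ≤ S.arcLen x a b := by
        refine intervalIntegral.integral_mono_on_of_le_Ioo hab
          ((hx.h1On.intervalIntegrable_deriv ha hb).norm.const_mul _)
          (hx.intervalIntegrable_jacobiNorm ha hb) fun s hs => ?_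
        refine le_trans ?_ (h _ (hx.le s (Ioo_subset_Icc_self hs)) _).1
        gcongr
        exact hc s (Ioo_subset_Ioc_self hs)

lemma exists_jacobiNorm_sub_le (hp : S.V p < S.E) {η : ℝ} (hη : 0 < η) :
    ∃ ρ > 0, ∀ {x a b}, S.IsWellCurve x a b → a ≤ b → (∀ s ∈ Icc a b, dist (x s) p < ρ) →
      S.jacobiNorm p (x b - x a) ≤ (1 + η) * S.arcLen x a b := by
  obtain ⟨ρ, hρ, hball⟩ := Metric.eventually_nhds_iff.1 (S.eventually_jacobiNorm_le hp hη)
  refine ⟨ρ, hρ, fun {x a b} hx hab hd => ?_⟩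
  have ha := left_mem_Icc.2 hab
  have hb := right_mem_Icc.2 hab
  have hI := hx.intervalIntegrable_jacobiNorm ha hb
  have hfrozen : IntervalIntegrable (fun s => S.jacobiNorm p (deriv x s)) volume a b := by
    refine (hI.const_mul (1 + η)).mono_fun' ?_ ?_
    · have hcont : ContinuousOn (fun v => S.jacobiNorm p v) univ :=
        S.continuousOn_jacobiNorm.comp (f := fun v => (p, v)) (by fun_prop) fun v _ =>
          ⟨S.mem_U hp.le, mem_univ _⟩
      exact ((continuousOn_univ.1 hcont).measurable.comp (measurable_deriv x)).aestronglyMeasurable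
    · rw [EventuallyLE, uIoc_of_le hab, ae_restrict_iff' measurableSet_Ioc]
      refine Eventually.of_forall fun s hs => ?_
      rw [Real.norm_of_nonneg (S.jacobiNorm_nonneg _ _)]
      exact hball (hd s (Ioc_subset_Icc_self hs)) _
  calc S.jacobiNorm p (x b - x a)
      ≤ ∫ s in a..b, S.jacobiNorm p (deriv x s) := by
        rw [hx.h1On.sub_eq_integral ha hb]
        exact S.jacobiNorm_integral_le hp.le hab (hx.h1On.intervalIntegrable_deriv ha hb)
    _ ≤ ∫ s in a..b, (1 + η) * S.jacobiNorm (x s) (deriv x s) :=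
        intervalIntegral.integral_mono_on hab hfrozen (hI.const_mul _) fun s hs =>
          hball (hd s hs) _
    _ = (1 + η) * S.arcLen x a b := intervalIntegral.integral_const_mul _ _

lemma exists_le_arcLen_of_depth (S : Setting N) (hc : 0 < c) :
    ∃ ℓ > 0, ∀ {x a b}, S.IsWellCurve x a b → a ≤ b → S.V (x a) = S.E → c ≤ S.depth (x b) →
      ℓ ≤ S.arcLen x a b := by
  obtain ⟨k, hk, hdisp⟩ := S.exists_norm_sub_le_arcLen
  have huc := S.hcomp.uniformContinuousOn_of_continuous (S.continuousOn_depth.mono S.hsub)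
  obtain ⟨η, hη, hunif⟩ := Metric.uniformContinuousOn_iff.1 huc (c / 2) (half_pos hc)
  refine ⟨k * (c / 2) * η, by positivity, fun {x a b} hx hab ha hb => ?_⟩
  have hxa : S.depth (x a) ≤ c / 2 := by
    rw [depth, ha, sub_self, Real.sqrt_zero]
    positivity
  obtain ⟨u, hu, hxu, hafter⟩ := exists_last_le
    (S.continuousOn_depth.comp hx.h1On.1 fun s hs => hx.mem_U hs) hab hxa
  have hxu' : S.depth (x u) ≤ c / 2 := hxu
  have hfar : η ≤ ‖x b - x u‖ := by
    by_contra! hlt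
    have h := hunif (x b) (hx.le b (right_mem_Icc.2 hab)) (x u) (hx.le u hu)
      (by rwa [dist_eq_norm])
    rw [Real.dist_eq, abs_lt] at h
    linarith
  calc k * (c / 2) * η ≤ k * (c / 2) * ‖x b - x u‖ := by gcongr
    _ ≤ S.arcLen x u b :=
        hdisp (hx.mono hu.1 le_rfl) hu.2 (half_pos hc).le fun s hs => (hafter s hs).le
    _ ≤ S.arcLen x a b := hx.arcLen_mono hu.1 hu.2 le_rfl

end Setting

lemma exists_first_exit {E : Type*} [NormedAddCommGroup E] [NormedSpace ℝ E] {W : Set E}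
    (hW : IsOpen W) (hb : Bornology.IsBounded W) {p v : E} (hp : p ∈ W) (hv : v ≠ 0) :
    ∃ T > 0, p + T • v ∈ frontier W ∧ ∀ t ∈ Ico (0 : ℝ) T, p + t • v ∈ W := by
  have hcont : Continuous fun t : ℝ => p + t • v := by fun_prop
  set A : Set ℝ := Ici 0 ∩ {t | p + t • v ∈ Wᶜ}
  have hAc : IsClosed A := isClosed_Ici.inter (hW.isClosed_compl.preimage hcont)
  have hAne : A.Nonempty := by
    obtain ⟨R, hR, hball⟩ := hb.subset_ball_lt 0 p
    refine ⟨R / ‖v‖, div_nonneg hR.le (norm_nonneg v), fun hmem => ?_⟩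
    have hlt := hball hmem
    rw [mem_ball_iff_norm, add_sub_cancel_left, norm_smul, norm_div, norm_norm,
      div_mul_cancel₀ _ (norm_ne_zero_iff.2 hv), Real.norm_of_nonneg hR.le] at hlt
    exact hlt.false
  have hAb : BddBelow A := ⟨0, fun t ht => ht.1⟩
  have hmem : sInf A ∈ A := hAc.csInf_mem hAne hAb
  have hin : ∀ t ∈ Ico 0 (sInf A), p + t • v ∈ W := fun t ht =>
    by_contra fun h => (csInf_le hAb ⟨ht.1, h⟩).not_gt ht.2
  have hpos : 0 < sInf A := hmem.1.lt_of_ne fun h => hmem.2 <| by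
    rwa [← h, zero_smul, add_zero]
  refine ⟨sInf A, hpos, ⟨?_, fun h => hmem.2 (interior_subset h)⟩, hin⟩
  exact map_mem_closure (s := Ico 0 (sInf A)) hcont
    (by rw [closure_Ico hpos.ne]; exact right_mem_Icc.2 hpos.le) hin

lemma mul_le_sub_of_le_fderiv {E : Type*} [NormedAddCommGroup E] [NormedSpace ℝ E] {f : E → ℝ}
    {p v : E} {m T : ℝ} (hT : 0 ≤ T)
    (hf : ∀ t ∈ Icc 0 T, DifferentiableAt ℝ f (p + t • v))
    (hm : ∀ t ∈ Icc 0 T, m ≤ fderiv ℝ f (p + t • v) v) :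
    m * T ≤ f (p + T • v) - f p := by
  have hder : ∀ t ∈ Icc 0 T,
      HasDerivAt (fun t : ℝ => f (p + t • v)) (fderiv ℝ f (p + t • v) v) t := fun t ht => by
    refine (hf t ht).hasFDerivAt.comp_hasDerivAt t ?_
    simpa using ((hasDerivAt_id t).smul_const v).const_add p
  have h := (convex_Icc 0 T).mul_sub_le_image_sub_of_le_deriv
    (fun t ht => (hder t ht).continuousAt.continuousWithinAt)
    (fun t ht => (hder t (interior_subset ht)).differentiableAt.differentiableWithinAt)
    (fun t ht => (hm t (interior_subset ht)).trans_eq (hder t (interior_subset ht)).deriv.symm)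
    0 (left_mem_Icc.2 hT) T (right_mem_Icc.2 hT) hT
  simpa using h

lemma fderiv_apply_eq_dotProduct (f : Vec N → ℝ) (x v : Vec N) :
    fderiv ℝ f x v = v ⬝ᵥ euclGrad f x := by
  conv_lhs => rw [pi_eq_sum_univ' v]
  simp only [map_sum, map_smul, smul_eq_mul, dotProduct, euclGrad]

namespace Setting

variable {S : Setting N} {Q p q : Vec N}

lemma differentiableAt_V (hp : p ∈ S.U) : DifferentiableAt ℝ S.V p :=
  (S.hVC.differentiableOn two_ne_zero).differentiableAt (S.hU.mem_nhds hp)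

lemma V_eq_of_mem_frontier (hp : p ∈ frontier {x | S.V x < S.E}) : S.V p = S.E := by
  have hle : p ∈ {x | S.V x ≤ S.E} :=
    closure_minimal (fun x (hx : S.V x < S.E) => hx.le) S.hcomp.isClosed hp.1
  refine le_antisymm hle (not_lt.1 fun hlt => hp.2 ?_)
  rwa [S.isOpen_well.interior_eq]

lemma exists_segment_exit (hp : S.V p < S.E) {v : Vec N} (hv : v ≠ 0) :
    ∃ T > 0, S.V (p + T • v) = S.E ∧ ∀ t ∈ Ico (0 : ℝ) T, S.V (p + t • v) < S.E := by
  have hb : Bornology.IsBounded {x | S.V x < S.E} :=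
    S.hcomp.isBounded.subset fun x (hx : S.V x < S.E) => hx.le
  obtain ⟨T, hT, hfr, hlt⟩ := exists_first_exit S.isOpen_well hb hp hv
  exact ⟨T, hT, V_eq_of_mem_frontier hfr, hlt⟩

lemma fderiv_V_euclGrad_pos (hp : S.V p = S.E) : 0 < fderiv ℝ S.V p (euclGrad S.V p) := by
  rw [fderiv_apply_eq_dotProduct]
  simpa using dotProduct_self_star_pos_iff.2 (S.hreg p hp)

lemma continuousOn_fderiv_V (S : Setting N) : ContinuousOn (fderiv ℝ S.V) {x | S.V x ≤ S.E} :=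
  (S.hVC.continuousOn_fderiv_of_isOpen S.hU one_le_two).mono S.hsub

lemma continuousOn_euclGrad (S : Setting N) : ContinuousOn (euclGrad S.V) {x | S.V x ≤ S.E} :=
  continuousOn_pi.2 fun _ => S.continuousOn_fderiv_V.clm_apply continuousOn_const

lemma exists_le_fderiv_V_euclGrad (S : Setting N) : ∃ m > 0, ∀ p q, S.V p ≤ S.E → S.V q ≤ S.E →
    S.E - S.V p < m → dist p q < m → m ≤ fderiv ℝ S.V q (euclGrad S.V p) := by
  set K := {x : Vec N | S.V x ≤ S.E}
  have hV : ContinuousOn (fun z : Vec N × Vec N => S.E - S.V z.1) (K ×ˢ K) :=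
    continuousOn_const.sub
      ((S.hVC.continuousOn.mono S.hsub).comp continuousOn_fst fun z hz => hz.1)
  have hF : ContinuousOn (fun z : Vec N × Vec N => fderiv ℝ S.V z.2 (euclGrad S.V z.1)) (K ×ˢ K) :=
    (S.continuousOn_fderiv_V.comp continuousOn_snd fun z hz => hz.2).clm_apply
      (S.continuousOn_euclGrad.comp continuousOn_fst fun z hz => hz.1)
  obtain ⟨m, hm, h⟩ := (S.hcomp.prod S.hcomp).exists_forall_le' (a := 0)
    (hF.sup (hV.sup continuous_dist.continuousOn)) fun ⟨p, q⟩ ⟨hp, hq⟩ => by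
      by_contra! hle
      obtain ⟨hF0, hV0, hd0⟩ : _ ∧ _ ∧ _ := by simpa only [sup_le_iff] using hle
      obtain rfl : p = q := dist_le_zero.1 hd0
      exact hF0.not_gt (fderiv_V_euclGrad_pos (le_antisymm hp (sub_nonpos.1 hV0)))
  refine ⟨m, hm, fun p q hp hq hpm hpq => ?_⟩
  rcases le_sup_iff.1 (h (p, q) ⟨hp, hq⟩) with hle | hle
  · exact hle
  · exact absurd hle (not_le.2 (max_lt hpm hpq))

lemma exists_norm_euclGrad_le (S : Setting N) :
    ∃ B > 0, ∀ p, S.V p ≤ S.E → ‖euclGrad S.V p‖ ≤ B := by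
  obtain ⟨B, hB⟩ := S.hcomp.exists_bound_of_continuousOn S.continuousOn_euclGrad
  exact ⟨max B 1, by positivity, fun p hp => (hB p hp).trans (le_max_left _ _)⟩

lemma exists_growth_euclGrad (S : Setting N) : ∃ m > 0, ∃ r > 0, ∀ p, S.V p < S.E →
    S.E - S.V p < m → euclGrad S.V p ≠ 0 ∧ ∀ T ∈ Icc 0 r,
      (∀ t ∈ Icc 0 T, S.V (p + t • euclGrad S.V p) ≤ S.E) →
      m * T ≤ S.V (p + T • euclGrad S.V p) - S.V p := by
  obtain ⟨m, hm, hF⟩ := S.exists_le_fderiv_V_euclGrad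
  obtain ⟨B, hB, hle⟩ := S.exists_norm_euclGrad_le
  refine ⟨m, hm, m / (2 * B), by positivity, fun p hp hpm => ⟨fun h0 => ?_, fun T hT hin => ?_⟩⟩
  · have h := hF p p hp.le hp.le hpm (by rwa [dist_self])
    rw [h0, map_zero] at h
    exact h.not_gt hm
  · refine mul_le_sub_of_le_fderiv hT.1 (fun t ht => differentiableAt_V (S.mem_U (hin t ht)))
      fun t ht => hF p _ hp.le (hin t ht) hpm ?_
    rw [dist_self_add_right, norm_smul, Real.norm_of_nonneg ht.1]
    calc t * ‖euclGrad S.V p‖ ≤ m / (2 * B) * B := by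
          gcongr
          exacts [ht.2.trans hT.2, hle p hp.le]
      _ < m := by field_simp; linarith

lemma exists_collar (S : Setting N) : ∃ C > 0, ∃ d > 0, ∀ p, S.V p < S.E → S.E - S.V p < d →
    ∃ p', S.V p' = S.E ∧ ‖p - p'‖ ≤ C * (S.E - S.V p) ∧
      ∀ θ ∈ Ioc (0 : ℝ) 1, S.V (p' + θ • (p - p')) < S.E ∧ S.V p ≤ S.V (p' + θ • (p - p')) := by
  obtain ⟨m, hm, r, hr, hgrow⟩ := S.exists_growth_euclGrad
  obtain ⟨B, hB, hle⟩ := S.exists_norm_euclGrad_le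
  refine ⟨B / m, by positivity, min m (m * r), by positivity, fun p hp hpd => ?_⟩
  obtain ⟨hv, hgrow⟩ := hgrow p hp (hpd.trans_le (min_le_left _ _))
  obtain ⟨T, hT, hTE, hTlt⟩ := exists_segment_exit hp hv
  have hlt : ∀ T' < T, ∀ t ∈ Icc 0 T', S.V (p + t • euclGrad S.V p) ≤ S.E := fun T' hT' t ht =>
    (hTlt t ⟨ht.1, ht.2.trans_lt hT'⟩).le
  have hTr : T ≤ r := by
    by_contra! hrT
    have h := hgrow r ⟨hr.le, le_rfl⟩ (hlt r hrT)
    have hVr := hTlt r ⟨hr.le, hrT⟩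
    linarith [hpd.trans_le (min_le_right _ _)]
  refine ⟨p + T • euclGrad S.V p, hTE, ?_, fun θ hθ => ?_⟩
  · have hmT : m * T ≤ S.E - S.V p := by
      rw [← hTE]
      refine hgrow T ⟨hT.le, hTr⟩ fun t ht => ?_
      rcases ht.2.eq_or_lt with rfl | htT
      exacts [hTE.le, (hTlt t ⟨ht.1, htT⟩).le]
    calc ‖p - (p + T • euclGrad S.V p)‖ = T * ‖euclGrad S.V p‖ := by
          rw [sub_add_cancel_left, norm_neg, norm_smul, Real.norm_of_nonneg hT.le]
      _ ≤ T * B := by gcongr; exact hle p hp.le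
      _ = B / m * (m * T) := by field_simp
      _ ≤ B / m * (S.E - S.V p) := by gcongr
  · have h0 : 0 ≤ (1 - θ) * T := mul_nonneg (sub_nonneg.2 hθ.2) hT.le
    have hθT : (1 - θ) * T < T := mul_lt_of_lt_one_left hT (by linarith [hθ.1])
    rw [show p + T • euclGrad S.V p + θ • (p - (p + T • euclGrad S.V p))
      = p + ((1 - θ) * T) • euclGrad S.V p by module]
    have h := hgrow _ ⟨h0, hθT.le.trans hTr⟩ (hlt _ hθT)
    exact ⟨hTlt _ ⟨h0, hθT⟩, sub_nonneg.1 (le_trans (by positivity) h)⟩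

end Setting

namespace Setting

variable {S : Setting N} {Q : Vec N} {x y : ℝ → Vec N} {u : ℝ}

namespace InXQ

lemma isWellCurve (hx : S.InXQ Q x) : S.IsWellCurve x 0 1 :=
  ⟨hx.1, fun s hs => hs.1.eq_or_lt.elim (fun h => h ▸ hx.2.1.le) fun h => (hx.2.2.1 s ⟨h, hs.2⟩).le⟩

lemma dV_le (hx : S.InXQ Q x) : S.dV Q ≤ S.LV x :=
  csInf_le ⟨0, by rintro r ⟨y, -, rfl⟩; exact arcLen_nonneg zero_le_one⟩ ⟨x, hx, rfl⟩

lemma dV_le_of_replace_initial (hx : S.InXQ Q x) (hu : u ∈ Ioc (0 : ℝ) 1) (hy : H1On y 0 u)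
    (hy0 : S.V (y 0) = S.E) (hyV : ∀ s ∈ Ioc 0 u, S.V (y s) < S.E) (hyu : y u = x u) :
    S.dV Q ≤ S.arcLen y 0 u + S.arcLen x u 1 := by
  obtain ⟨z, hzy, hzx, hz⟩ := hy.exists_concat hu.1.le hu.2 (hx.1.mono hu.1.le le_rfl) hyu
  have hzQ : S.InXQ Q z := by
    refine ⟨hz, by rw [hzy (left_mem_Icc.2 hu.1.le), hy0], fun s hs => ?_, ?_⟩
    · rcases le_or_gt s u with hsu | hsu
      · exact hzy ⟨hs.1.le, hsu⟩ ▸ hyV s ⟨hs.1, hsu⟩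
      · exact hzx ⟨hsu.le, hs.2⟩ ▸ hx.2.2.1 s hs
    · rw [hzx (right_mem_Icc.2 hu.2), hx.2.2.2]
  rw [← arcLen_congr hzy hu.1.le, ← arcLen_congr hzx hu.2,
    hzQ.isWellCurve.arcLen_add (Ioc_subset_Icc_self hu)]
  exact hzQ.dV_le

end InXQ

lemma exists_arcLen_segment_le (S : Setting N) : ∃ K > 0, ∀ {u D : ℝ} {p q : Vec N}, 0 < u →
    (∀ θ ∈ Ioc (0 : ℝ) 1, S.V (p + θ • (q - p)) ≤ S.E ∧ S.depth (p + θ • (q - p)) ≤ D) →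
    S.arcLen (fun s => p + (s / u) • (q - p)) 0 u ≤ K * D * ‖q - p‖ := by
  obtain ⟨k, -, K, hK, h⟩ := S.exists_jacobiNorm_bounds
  refine ⟨K, hK, fun {u D p q} hu hseg => ?_⟩
  have hder : ∀ s, deriv (fun s : ℝ => p + (s / u) • (q - p)) s = u⁻¹ • (q - p) := fun s => by
    have h : HasDerivAt (fun s : ℝ => p + (s / u) • (q - p)) ((1 / u) • (q - p)) s :=
      (((hasDerivAt_id s).div_const u).smul_const (q - p)).const_add p
    rw [h.deriv, one_div]
  have hbound : ∀ s ∈ uIoc 0 u, ‖S.jacobiNorm (p + (s / u) • (q - p))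
      (deriv (fun s : ℝ => p + (s / u) • (q - p)) s)‖ ≤ K * D * (u⁻¹ * ‖q - p‖) := fun s hs => by
    rw [uIoc_of_le hu.le] at hs
    obtain ⟨hV, hD⟩ := hseg (s / u) ⟨div_pos hs.1 hu, (div_le_one hu).2 hs.2⟩
    rw [Real.norm_of_nonneg (S.jacobiNorm_nonneg _ _), hder]
    refine (h _ hV _).2.trans ?_
    rw [norm_smul, Real.norm_of_nonneg (inv_pos.2 hu).le]
    gcongr
  refine (le_abs_self _).trans <|
    (intervalIntegral.norm_integral_le_of_norm_le_const hbound).trans_eq ?_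
  rw [sub_zero, abs_of_pos hu]
  field_simp

lemma exists_dV_le (S : Setting N) (Q : Vec N) : ∃ C > 0, ∀ x, S.InXQ Q x →
    ∀ u ∈ Ioc (0 : ℝ) 1, S.dV Q ≤ C * S.depth (x u) ^ 3 + S.arcLen x u 1 := by
  obtain ⟨K, hK, hlen⟩ := S.exists_arcLen_segment_le
  obtain ⟨C, hC, d, hd, hcol⟩ := S.exists_collar
  refine ⟨max (|S.dV Q| / √d ^ 3) (K * C), lt_max_of_lt_right (by positivity), fun x hx u hu => ?_⟩
  have hxu := hx.2.2.1 u hu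
  have hdepth := S.depth_nonneg (x u)
  rcases lt_or_ge (S.E - S.V (x u)) d with hlt | hge
  · obtain ⟨p, hpE, hpn, hseg⟩ := hcol _ hxu hlt
    refine (hx.dV_le_of_replace_initial hu (y := fun s => p + (s / u) • (x u - p))
      (.of_contDiff (by fun_prop)) (by simpa using hpE)
      (fun s hs => (hseg _ ⟨div_pos hs.1 hu.1, (div_le_one hu.1).2 hs.2⟩).1)
      (by simp [div_self hu.1.ne'])).trans ?_
    gcongr
    calc S.arcLen (fun s => p + (s / u) • (x u - p)) 0 u
        ≤ K * S.depth (x u) * ‖x u - p‖ := hlen hu.1 fun θ hθ =>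
          ⟨(hseg θ hθ).1.le, Real.sqrt_le_sqrt (sub_le_sub_left (hseg θ hθ).2 _)⟩
      _ ≤ K * S.depth (x u) * (C * S.depth (x u) ^ 2) := by
          rw [S.depth_sq hxu.le]
          gcongr
      _ = K * C * S.depth (x u) ^ 3 := by ring
      _ ≤ max (|S.dV Q| / √d ^ 3) (K * C) * S.depth (x u) ^ 3 := by
          gcongr
          exact le_max_right _ _
  · refine le_add_of_le_of_nonneg ?_ (arcLen_nonneg hu.2)
    calc S.dV Q ≤ |S.dV Q| / √d ^ 3 * √d ^ 3 := by
          rw [div_mul_cancel₀ _ (by positivity)]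
          exact le_abs_self _
      _ ≤ max (|S.dV Q| / √d ^ 3) (K * C) * S.depth (x u) ^ 3 := by
          gcongr
          exacts [le_max_left _ _, Real.sqrt_le_sqrt hge]

lemma exists_inXQ (hQ : S.V Q < S.E) : ∃ x, S.InXQ Q x := by
  have hv : (Pi.single ⟨0, S.hdim⟩ 1 : Vec N) ≠ 0 := by simp
  obtain ⟨T, hT, hTE, hlt⟩ := exists_segment_exit hQ hv
  refine ⟨fun s => Q + ((1 - s) * T) • Pi.single ⟨0, S.hdim⟩ 1, .of_contDiff (by fun_prop),
    by simpa using hTE, fun s hs => hlt _ ⟨mul_nonneg (sub_nonneg.2 hs.2) hT.le, ?_⟩, by simp⟩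
  exact mul_lt_of_lt_one_left hT (by linarith [hs.1])

lemma dV_pos (hQ : S.V Q < S.E) : 0 < S.dV Q := by
  obtain ⟨ℓ, hℓ, h⟩ := S.exists_le_arcLen_of_depth (S.depth_pos.2 hQ)
  obtain ⟨x₀, hx₀⟩ := exists_inXQ hQ
  refine hℓ.trans_le (le_csInf ⟨_, x₀, hx₀, rfl⟩ ?_)
  rintro r ⟨x, hx, rfl⟩
  exact h hx.isWellCurve zero_le_one hx.2.1 (by rw [hx.2.2.2])

end Setting

namespace Setting

variable {S : Setting N} {Q : Vec N} {x : ℝ → Vec N} {τ : ℝ → ℝ} {s t u : ℝ}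

variable (S) in
/-- `τ` is a right inverse of the normalized Jacobi arc length of `x` on `[0, 1]`, so that `x ∘ τ`
is the reparametrization of `x` proportional to arc length. -/
structure IsArcLenParam (x : ℝ → Vec N) (τ : ℝ → ℝ) : Prop where
  map_one : τ 1 = 1
  mem_Icc : ∀ s ∈ Icc (0 : ℝ) 1, τ s ∈ Icc (0 : ℝ) 1
  arcLen_eq : ∀ s ∈ Icc (0 : ℝ) 1, S.arcLen x 0 (τ s) = s * S.LV x

lemma IsWellCurve.exists_isArcLenParam (hx : S.IsWellCurve x 0 1) : ∃ τ, S.IsArcLenParam x τ := by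
  have hLV : 0 ≤ S.LV x := arcLen_nonneg zero_le_one
  have hex : ∀ s, ∃ u, s ∈ Icc (0 : ℝ) 1 → u ∈ Icc (0 : ℝ) 1 ∧ S.arcLen x 0 u = s * S.LV x :=
    fun s => by
      by_cases hs : s ∈ Icc (0 : ℝ) 1
      · obtain ⟨u, hu, hus⟩ := intermediate_value_Icc zero_le_one
          (hx.continuousOn_arcLen zero_le_one)
          (show s * S.LV x ∈ Icc (S.arcLen x 0 0) (S.arcLen x 0 1) by
            rw [arcLen, intervalIntegral.integral_same, ← LV_eq_arcLen]
            exact ⟨mul_nonneg hs.1 hLV, mul_le_of_le_one_left hLV hs.2⟩)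
        exact ⟨u, fun _ => ⟨hu, hus⟩⟩
      · exact ⟨0, fun h => absurd h hs⟩
  choose τ hτ using hex
  refine ⟨Function.update τ 1 1, Function.update_self _ _ _, fun s hs => ?_, fun s hs => ?_⟩
  all_goals rcases eq_or_ne s 1 with rfl | h1
  · simp
  · simpa [h1] using (hτ s hs).1
  · simp [LV_eq_arcLen]
  · simpa [h1] using (hτ s hs).2

namespace IsArcLenParam

lemma pos (hτ : S.IsArcLenParam x τ) (hL : 0 < S.LV x) (hs : s ∈ Ioc (0 : ℝ) 1) : 0 < τ s := by
  have hsI := Ioc_subset_Icc_self hs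
  refine (hτ.mem_Icc s hsI).1.lt_of_ne fun h0 => (mul_pos hs.1 hL).ne' ?_
  rw [← hτ.arcLen_eq s hsI, ← h0, arcLen, intervalIntegral.integral_same]

lemma monotoneOn (hτ : S.IsArcLenParam x τ) (hx : S.IsWellCurve x 0 1) (hL : 0 < S.LV x) :
    MonotoneOn τ (Icc 0 1) := fun s hs t ht hst => by
  by_contra! hlt
  have hle := (hx.mono le_rfl (hτ.mem_Icc s hs).2).arcLen_mono le_rfl (hτ.mem_Icc t ht).1 hlt.le
  rw [hτ.arcLen_eq s hs, hτ.arcLen_eq t ht] at hle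
  rw [le_antisymm hst (le_of_mul_le_mul_right hle hL)] at hlt
  exact hlt.false

lemma arcLen_sub (hτ : S.IsArcLenParam x τ) (hx : S.IsWellCurve x 0 1) (hL : 0 < S.LV x)
    (hs : s ∈ Icc (0 : ℝ) 1) (ht : t ∈ Icc (0 : ℝ) 1) (hst : s ≤ t) :
    S.arcLen x (τ s) (τ t) = (t - s) * S.LV x := by
  have hadd := (hx.mono le_rfl (hτ.mem_Icc t ht).2).arcLen_add
    ⟨(hτ.mem_Icc s hs).1, hτ.monotoneOn hx hL hs ht hst⟩
  rw [hτ.arcLen_eq s hs, hτ.arcLen_eq t ht] at hadd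
  linarith

end IsArcLenParam

variable (S) in
/-- `γ` is a pointwise limit on `(0, 1]`, along the filter `l`, of the arc length
reparametrizations `x n ∘ τ n` of a minimizing sequence `x n` of admissible curves ending at `Q`.
The value `γ 0` is left free, as it is recovered by continuity. -/
structure IsMinimizingLimit (l : Filter ℕ) (Q : Vec N) (x : ℕ → ℝ → Vec N) (τ : ℕ → ℝ → ℝ)
    (γ : ℝ → Vec N) : Prop where
  inXQ : ∀ n, S.InXQ Q (x n)
  isArcLenParam : ∀ n, S.IsArcLenParam (x n) (τ n)
  tendsto_LV : Tendsto (fun n => S.LV (x n)) l (𝓝 (S.dV Q))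
  tendsto : ∀ s ∈ Ioc (0 : ℝ) 1, Tendsto (fun n => x n (τ n s)) l (𝓝 (γ s))

lemma exists_minimizing_sequence (hQ : S.V Q < S.E) : ∃ x : ℕ → ℝ → Vec N,
    (∀ n, S.InXQ Q (x n)) ∧ Tendsto (fun n => S.LV (x n)) atTop (𝓝 (S.dV Q)) := by
  obtain ⟨x₀, hx₀⟩ := exists_inXQ hQ
  obtain ⟨r, -, hr, hmem⟩ := exists_seq_tendsto_sInf
    (S := {r | ∃ x, S.InXQ Q x ∧ r = S.LV x}) ⟨_, x₀, hx₀, rfl⟩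
    ⟨0, by rintro r ⟨y, -, rfl⟩; exact arcLen_nonneg zero_le_one⟩
  choose x hx hrx using hmem
  exact ⟨x, hx, hr.congr hrx⟩

-- The curves `x n ∘ τ n` are not equicontinuous at `0`, so compactness is applied pointwise, along
-- an ultrafilter, instead of through Arzelà–Ascoli.
lemma exists_isMinimizingLimit (hQ : S.V Q < S.E) :
    ∃ x τ γ, S.IsMinimizingLimit (hyperfilter ℕ) Q x τ γ := by
  obtain ⟨x, hx, hlim⟩ := exists_minimizing_sequence hQ
  choose τ hτ using fun n => (hx n).isWellCurve.exists_isArcLenParam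
  have hex : ∀ s, ∃ p, s ∈ Ioc (0 : ℝ) 1 →
      Tendsto (fun n => x n (τ n s)) (hyperfilter ℕ) (𝓝 p) := fun s => by
    by_cases hs : s ∈ Ioc (0 : ℝ) 1
    · obtain ⟨p, -, hp⟩ := S.hcomp.ultrafilter_le_nhds ((hyperfilter ℕ).map fun n => x n (τ n s))
        (le_principal_iff.2 (Filter.mem_map.2 (Eventually.of_forall fun n =>
          (hx n).isWellCurve.le _ ((hτ n).mem_Icc s (Ioc_subset_Icc_self hs)))))
      exact ⟨p, fun _ => hp⟩
    · exact ⟨0, fun h => absurd h hs⟩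
  choose γ hγ using hex
  exact ⟨x, τ, γ, hx, hτ, hlim.mono_left Nat.hyperfilter_le_atTop, hγ⟩

namespace IsMinimizingLimit

variable {l : Filter ℕ} {x : ℕ → ℝ → Vec N} {τ : ℕ → ℝ → ℝ} {γ γ' : ℝ → Vec N}

lemma congr (h : S.IsMinimizingLimit l Q x τ γ) (hγ : EqOn γ' γ (Ioc 0 1)) :
    S.IsMinimizingLimit l Q x τ γ' :=
  ⟨h.inXQ, h.isArcLenParam, h.tendsto_LV, fun s hs => hγ hs ▸ h.tendsto s hs⟩

lemma LV_pos (h : S.IsMinimizingLimit l Q x τ γ) (hQ : S.V Q < S.E) (n : ℕ) : 0 < S.LV (x n) :=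
  (dV_pos hQ).trans_le (h.inXQ n).dV_le

lemma tau_mem (h : S.IsMinimizingLimit l Q x τ γ) (hQ : S.V Q < S.E) (n : ℕ)
    (hs : s ∈ Ioc (0 : ℝ) 1) : τ n s ∈ Ioc (0 : ℝ) 1 :=
  ⟨(h.isArcLenParam n).pos (h.LV_pos hQ n) hs,
    ((h.isArcLenParam n).mem_Icc s (Ioc_subset_Icc_self hs)).2⟩

lemma tau_le (h : S.IsMinimizingLimit l Q x τ γ) (hQ : S.V Q < S.E) (n : ℕ) (hs : 0 < s)
    (hst : s ≤ t) (ht : t ≤ 1) : τ n s ≤ τ n t :=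
  (h.isArcLenParam n).monotoneOn (h.inXQ n).isWellCurve (h.LV_pos hQ n)
    ⟨hs.le, hst.trans ht⟩ ⟨hs.le.trans hst, ht⟩ hst

lemma arcLen_tau (h : S.IsMinimizingLimit l Q x τ γ) (hQ : S.V Q < S.E) (n : ℕ) (hs : 0 < s)
    (hst : s ≤ t) (ht : t ≤ 1) : S.arcLen (x n) (τ n s) (τ n t) = (t - s) * S.LV (x n) :=
  (h.isArcLenParam n).arcLen_sub (h.inXQ n).isWellCurve (h.LV_pos hQ n)
    ⟨hs.le, hst.trans ht⟩ ⟨hs.le.trans hst, ht⟩ hst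

lemma isWellCurve_tau (h : S.IsMinimizingLimit l Q x τ γ) (hQ : S.V Q < S.E) (n : ℕ) (hs : 0 < s)
    (hst : s ≤ t) (ht : t ≤ 1) : S.IsWellCurve (x n) (τ n s) (τ n t) :=
  (h.inXQ n).isWellCurve.mono (h.tau_mem hQ n ⟨hs, hst.trans ht⟩).1.le
    (h.tau_mem hQ n ⟨hs.trans_le hst, ht⟩).2

-- The part of `x n` before `τ n s` has length about `s * S.dV Q`, and it could be replaced by a
-- curve of length `O(depth ^ 3)`; this is where the exponent `1 / 3` comes from.
lemma exists_eventually_le_depth (h : S.IsMinimizingLimit l Q x τ γ) (hQ : S.V Q < S.E) :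
    ∃ κ > 0, ∀ s ∈ Ioc (0 : ℝ) 1, ∀ᶠ n in l, ∀ u ∈ Icc (τ n s) 1,
      κ * s ^ (1 / 3 : ℝ) ≤ S.depth (x n u) := by
  obtain ⟨C, hC, hdV⟩ := S.exists_dV_le Q
  have hpos := dV_pos hQ
  refine ⟨(S.dV Q / (2 * C)) ^ (1 / 3 : ℝ), by positivity, fun s hs => ?_⟩
  have hs0 := hs.1
  have hev : ∀ᶠ n in l, (1 - s) * S.LV (x n) < (1 - s / 2) * S.dV Q :=
    (h.tendsto_LV.const_mul (1 - s)).eventually_lt_const (by nlinarith)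
  filter_upwards [hev] with n hn u hu
  have hτ := h.tau_mem hQ n hs
  have hle : S.dV Q ≤ C * S.depth (x n u) ^ 3 + (1 - s) * S.LV (x n) := by
    refine (hdV _ (h.inXQ n) u ⟨hτ.1.trans_le hu.1, hu.2⟩).trans ?_
    rw [← h.arcLen_tau hQ n hs.1 hs.2 le_rfl, (h.isArcLenParam n).map_one]
    gcongr
    exact ((h.inXQ n).isWellCurve.mono hτ.1.le le_rfl).arcLen_mono hu.1 hu.2 le_rfl
  rw [← Real.mul_rpow (by positivity) hs0.le, one_div,
    Real.rpow_inv_le_iff_of_pos (by positivity) (S.depth_nonneg _) three_pos, Real.rpow_ofNat]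
  calc S.dV Q / (2 * C) * s = s / 2 * S.dV Q / C := by field_simp
    _ ≤ S.depth (x n u) ^ 3 := (div_le_iff₀' hC).2 (by linarith)

lemma exists_eventually_norm_sub_le (h : S.IsMinimizingLimit l Q x τ γ) (hQ : S.V Q < S.E) :
    ∃ C ≥ 0, ∀ s t, 0 < s → s ≤ t → t ≤ 1 → ∀ᶠ n in l, ∀ u ∈ Icc (τ n s) (τ n t),
      ‖x n u - x n (τ n s)‖ ≤ C * s ^ (-(1 / 3) : ℝ) * (t - s) := by
  obtain ⟨κ, hκ, hdepth⟩ := h.exists_eventually_le_depth hQ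
  obtain ⟨k, hk, hdisp⟩ := S.exists_norm_sub_le_arcLen
  have hpos := dV_pos hQ
  refine ⟨2 * S.dV Q / (k * κ), by positivity, fun s t hs hst ht => ?_⟩
  filter_upwards [hdepth s ⟨hs, hst.trans ht⟩, h.tendsto_LV.eventually_le_const
    (lt_two_mul_self hpos)] with n hn hLV u hu
  have hx := h.isWellCurve_tau hQ n hs hst ht
  have ht1 := (h.tau_mem hQ n ⟨hs.trans_le hst, ht⟩).2
  have hlen : k * (κ * s ^ (1 / 3 : ℝ)) * ‖x n u - x n (τ n s)‖ ≤ (t - s) * (2 * S.dV Q) :=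
    calc k * (κ * s ^ (1 / 3 : ℝ)) * ‖x n u - x n (τ n s)‖ ≤ S.arcLen (x n) (τ n s) u :=
          hdisp (hx.mono le_rfl hu.2) hu.1 (by positivity) fun v hv =>
            hn v ⟨hv.1.le, hv.2.trans (hu.2.trans ht1)⟩
      _ ≤ S.arcLen (x n) (τ n s) (τ n t) := hx.arcLen_mono le_rfl hu.1 hu.2
      _ = (t - s) * S.LV (x n) := h.arcLen_tau hQ n hs hst ht
      _ ≤ (t - s) * (2 * S.dV Q) := mul_le_mul_of_nonneg_left hLV (sub_nonneg.2 hst)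
  calc ‖x n u - x n (τ n s)‖ ≤ (t - s) * (2 * S.dV Q) / (k * (κ * s ^ (1 / 3 : ℝ))) :=
        (le_div_iff₀' (by positivity)).2 hlen
    _ = 2 * S.dV Q / (k * κ) * s ^ (-(1 / 3) : ℝ) * (t - s) := by
        rw [Real.rpow_neg hs.le]
        field_simp

variable [l.NeBot]

lemma V_le (h : S.IsMinimizingLimit l Q x τ γ) (hs : s ∈ Ioc (0 : ℝ) 1) : S.V (γ s) ≤ S.E :=
  S.hcomp.isClosed.mem_of_tendsto (h.tendsto s hs) (Eventually.of_forall fun n =>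
    (h.inXQ n).isWellCurve.le _ ((h.isArcLenParam n).mem_Icc s (Ioc_subset_Icc_self hs)))

lemma tendsto_depth (h : S.IsMinimizingLimit l Q x τ γ) (hs : s ∈ Ioc (0 : ℝ) 1) :
    Tendsto (fun n => S.depth (x n (τ n s))) l (𝓝 (S.depth (γ s))) :=
  (S.continuousOn_depth.continuousAt (S.hU.mem_nhds (S.mem_U (h.V_le hs)))).tendsto.comp
    (h.tendsto s hs)

lemma map_one (h : S.IsMinimizingLimit l Q x τ γ) : γ 1 = Q := by
  have h1 := h.tendsto 1 ⟨one_pos, le_rfl⟩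
  simp only [(h.isArcLenParam _).map_one, (h.inXQ _).2.2.2] at h1
  exact tendsto_nhds_unique h1 tendsto_const_nhds

lemma V_lt (h : S.IsMinimizingLimit l Q x τ γ) (hQ : S.V Q < S.E) (hs : s ∈ Ioc (0 : ℝ) 1) :
    S.V (γ s) < S.E := by
  obtain ⟨κ, hκ, hdepth⟩ := h.exists_eventually_le_depth hQ
  refine S.depth_pos.1 ((mul_pos hκ (Real.rpow_pos_of_pos hs.1 (1 / 3))).trans_le
    (ge_of_tendsto (h.tendsto_depth hs) ?_))
  filter_upwards [hdepth s hs] with n hn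
  exact hn _ ⟨le_rfl, (h.tau_mem hQ n hs).2⟩

lemma exists_norm_sub_le (h : S.IsMinimizingLimit l Q x τ γ) (hQ : S.V Q < S.E) :
    ∃ C ≥ 0, ∀ s t, 0 < s → s ≤ t → t ≤ 1 →
      ‖γ t - γ s‖ ≤ C * s ^ (-(1 / 3) : ℝ) * (t - s) := by
  obtain ⟨C, hC, hdisp⟩ := h.exists_eventually_norm_sub_le hQ
  refine ⟨C, hC, fun s t hs hst ht => ?_⟩
  refine le_of_tendsto ((h.tendsto t ⟨hs.trans_le hst, ht⟩).sub
    (h.tendsto s ⟨hs, hst.trans ht⟩)).norm ?_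
  filter_upwards [hdisp s t hs hst ht] with n hn
  exact hn _ ⟨h.tau_le hQ n hs hst ht, le_rfl⟩

lemma exists_le_mul_dV_of_depth (h : S.IsMinimizingLimit l Q x τ γ) {c : ℝ} (hc : 0 < c) :
    ∃ ℓ > 0, ∀ s ∈ Ioc (0 : ℝ) 1, c ≤ S.depth (γ s) → ℓ ≤ s * S.dV Q := by
  obtain ⟨ℓ, hℓ, hlen⟩ := S.exists_le_arcLen_of_depth (half_pos hc)
  refine ⟨ℓ, hℓ, fun s hs hcs => ge_of_tendsto (h.tendsto_LV.const_mul s) ?_⟩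
  filter_upwards [(h.tendsto_depth hs).eventually_const_lt ((half_lt_self hc).trans_le hcs)]
    with n hn
  have hsI := Ioc_subset_Icc_self hs
  have hτ := (h.isArcLenParam n).mem_Icc s hsI
  rw [← (h.isArcLenParam n).arcLen_eq s hsI]
  exact hlen ((h.inXQ n).isWellCurve.mono le_rfl hτ.2) hτ.1 (h.inXQ n).2.1 hn.le

lemma eventually_jacobiNorm_sub_le (h : S.IsMinimizingLimit l Q x τ γ) (hQ : S.V Q < S.E)
    (hs : s ∈ Ioo (0 : ℝ) 1) {η : ℝ} (hη : 0 < η) :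
    ∀ᶠ t in 𝓝[>] s, S.jacobiNorm (γ s) (γ t - γ s) ≤ (1 + η) * ((t - s) * S.dV Q) := by
  have hsI := Ioo_subset_Ioc_self hs
  obtain ⟨ρ, hρ, hfrozen⟩ := exists_jacobiNorm_sub_le (h.V_lt hQ hsI) hη
  obtain ⟨C, -, hdisp⟩ := h.exists_eventually_norm_sub_le hQ
  have hnear : ∀ᶠ t in 𝓝[>] s, C * s ^ (-(1 / 3) : ℝ) * (t - s) < ρ / 2 :=
    nhdsWithin_le_nhds <| (by fun_prop : Continuous fun t => C * s ^ (-(1 / 3) : ℝ) * (t - s))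
      |>.tendsto s |>.eventually_lt_const (by simpa using hρ)
  filter_upwards [hnear, Ioo_mem_nhdsGT hs.2] with t hts ht
  have htI : t ∈ Ioc (0 : ℝ) 1 := ⟨hs.1.trans ht.1, ht.2.le⟩
  have hcont : ContinuousAt (fun v => S.jacobiNorm (γ s) v) (γ t - γ s) :=
    (S.continuousOn_jacobiNorm.continuousAt (prod_mem_nhds
      (S.hU.mem_nhds (S.mem_U (h.V_le hsI))) univ_mem)).comp (f := fun v => (γ s, v))
      (by fun_prop)
  refine le_of_tendsto_of_tendsto
    (hcont.tendsto.comp ((h.tendsto t htI).sub (h.tendsto s hsI)))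
    ((h.tendsto_LV.const_mul (t - s)).const_mul (1 + η)) ?_
  filter_upwards [hdisp s t hs.1 ht.1.le ht.2.le,
    (h.tendsto s hsI).eventually (Metric.ball_mem_nhds _ (half_pos hρ))] with n hn hns
  rw [← h.arcLen_tau hQ n hs.1 ht.1.le ht.2.le]
  refine hfrozen (h.isWellCurve_tau hQ n hs.1 ht.1.le ht.2.le)
    (h.tau_le hQ n hs.1 ht.1.le ht.2.le) fun u hu => ?_
  calc dist (x n u) (γ s) ≤ ‖x n u - x n (τ n s)‖ + dist (x n (τ n s)) (γ s) := by
        rw [← dist_eq_norm]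
        exact dist_triangle _ _ _
    _ < ρ / 2 + ρ / 2 := add_lt_add ((hn u hu).trans_lt hts) hns
    _ = ρ := add_halves ρ

lemma exists_H1On_congr (h : S.IsMinimizingLimit l Q x τ γ) (hQ : S.V Q < S.E) :
    ∃ γ', H1On γ' 0 1 ∧ S.IsMinimizingLimit l Q x τ γ' := by
  obtain ⟨C, hC, hdisp⟩ := h.exists_norm_sub_le hQ
  obtain ⟨γ', hγ', heq⟩ := exists_H1On_extension hC (by norm_num) (by norm_num) hdisp
  exact ⟨γ', hγ', h.congr heq⟩

lemma inXQ_limit (h : S.IsMinimizingLimit l Q x τ γ) (hQ : S.V Q < S.E) (hγ : H1On γ 0 1) :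
    S.InXQ Q γ := by
  have hlim : Tendsto γ (𝓝[>] 0) (𝓝 (γ 0)) := by
    rw [← nhdsWithin_Ioc_eq_nhdsGT one_pos]
    exact (hγ.1 0 (left_mem_Icc.2 zero_le_one)).mono Ioc_subset_Icc_self
  have hIoc : ∀ᶠ s in 𝓝[>] (0 : ℝ), s ∈ Ioc (0 : ℝ) 1 := Ioc_mem_nhdsGT one_pos
  have hle : S.V (γ 0) ≤ S.E :=
    S.hcomp.isClosed.mem_of_tendsto hlim (hIoc.mono fun s hs => h.V_le hs)
  refine ⟨hγ, by_contra fun hne => ?_, fun s hs => h.V_lt hQ hs, h.map_one⟩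
  have hd := S.depth_pos.2 (hle.lt_of_ne hne)
  obtain ⟨ℓ, hℓ, hlen⟩ := h.exists_le_mul_dV_of_depth (half_pos hd)
  have hdepth : Tendsto (fun s => S.depth (γ s)) (𝓝[>] 0) (𝓝 (S.depth (γ 0))) :=
    (S.continuousOn_depth.continuousAt (S.hU.mem_nhds (S.mem_U hle))).tendsto.comp hlim
  have hzero : ∀ᶠ s in 𝓝[>] (0 : ℝ), s * S.dV Q < ℓ :=
    nhdsWithin_le_nhds <| (by fun_prop : Continuous fun s => s * S.dV Q).tendsto 0
      |>.eventually_lt_const (by simpa using hℓ)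
  obtain ⟨s, hs, hsd, hsℓ⟩ :=
    (hIoc.and ((hdepth.eventually_const_lt (half_lt_self hd)).and hzero)).exists
  exact (hlen s hs hsd.le).not_gt hsℓ

lemma jacobiNorm_deriv_le (h : S.IsMinimizingLimit l Q x τ γ) (hQ : S.V Q < S.E)
    (hs : s ∈ Ioo (0 : ℝ) 1) {v : Vec N} (hγ : HasDerivAt γ v s) :
    S.jacobiNorm (γ s) v ≤ S.dV Q := by
  have hsV := h.V_lt hQ (Ioo_subset_Ioc_self hs)
  have hcont : ContinuousAt (fun v => S.jacobiNorm (γ s) v) v :=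
    (S.continuousOn_jacobiNorm.continuousAt (prod_mem_nhds
      (S.hU.mem_nhds (S.mem_U hsV.le)) univ_mem)).comp (f := fun v => (γ s, v)) (by fun_prop)
  have hslope := hcont.tendsto.comp (hγ.tendsto_slope.mono_left (nhdsGT_le_nhdsNE s))
  have hle : ∀ η > 0, S.jacobiNorm (γ s) v ≤ (1 + η) * S.dV Q := fun η hη => by
    refine le_of_tendsto hslope ?_
    filter_upwards [h.eventually_jacobiNorm_sub_le hQ hs hη, self_mem_nhdsWithin] with t ht hst
    have hts : 0 < t - s := sub_pos.2 hst
    rw [Function.comp_apply, slope_def_module, S.jacobiNorm_smul, abs_of_pos (inv_pos.2 hts),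
      inv_mul_le_iff₀ hts]
    linarith
  have hlim : Tendsto (fun η => (1 + η) * S.dV Q) (𝓝[>] 0) (𝓝 (S.dV Q)) :=
    tendsto_nhdsWithin_of_tendsto_nhds
      (by simpa using (by fun_prop : Continuous fun η => (1 + η) * S.dV Q).tendsto 0)
  exact ge_of_tendsto hlim (eventually_mem_nhdsWithin.mono hle)

end IsMinimizingLimit

end Setting

section QuadraticLagrangian

variable {X E : Type*} [NormedAddCommGroup X] [NormedSpace ℝ X] [NormedAddCommGroup E]
  [NormedSpace ℝ E] {L : X × E → ℝ} {U K : Set X}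

lemma fderiv_smul_of_homogeneous (hU : IsOpen U) (hL : ContDiffOn ℝ 1 L (U ×ˢ univ))
    (hhom : ∀ x ∈ U, ∀ (c : ℝ) v, L (x, c • v) = c ^ 2 * L (x, v)) {x : X} (hx : x ∈ U)
    (c : ℝ) (y : X) (v w : E) :
    fderiv ℝ L (x, c • v) (y, c • w) = c ^ 2 * fderiv ℝ L (x, v) (y, w) := by
  have hd : ∀ v, DifferentiableAt ℝ L (x, v) := fun v =>
    (hL.differentiableOn one_ne_zero).differentiableAt
      (prod_mem_nhds (hU.mem_nhds hx) univ_mem)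
  let A : X × E →L[ℝ] X × E := (ContinuousLinearMap.id ℝ X).prodMap (c • ContinuousLinearMap.id ℝ E)
  have hA : HasFDerivAt (L ∘ A) ((fderiv ℝ L (x, c • v)).comp A) (x, v) :=
    (hd (c • v)).hasFDerivAt.comp (x, v) A.hasFDerivAt
  have hmul : HasFDerivAt (L ∘ A) (c ^ 2 • fderiv ℝ L (x, v)) (x, v) := by
    refine ((hd v).hasFDerivAt.const_mul (c ^ 2)).congr_of_eventuallyEq ?_
    filter_upwards [prod_mem_nhds (hU.mem_nhds hx) univ_mem] with z hz
    exact hhom z.1 hz.1 c z.2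
  exact congrArg (fun l => l (y, w)) (hA.unique hmul)

lemma exists_abs_fderiv_le_of_homogeneous [FiniteDimensional ℝ X] [FiniteDimensional ℝ E]
    (hU : IsOpen U) (hL : ContDiffOn ℝ 1 L (U ×ˢ univ))
    (hhom : ∀ x ∈ U, ∀ (c : ℝ) v, L (x, c • v) = c ^ 2 * L (x, v)) (hK : IsCompact K)
    (hKU : K ⊆ U) (M : ℝ) :
    ∃ C, 0 ≤ C ∧ ∀ x ∈ K, ∀ y, ‖y‖ ≤ M → ∀ v w,
      |fderiv ℝ L (x, v) (y, w)| ≤ C * ‖(v, w)‖ ^ 2 := by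
  let f : (X × X) × E × E → ℝ := fun z => fderiv ℝ L (z.1.1, z.2.1) (z.1.2, z.2.2)
  have hf : ContinuousOn f ((K ×ˢ Metric.closedBall 0 M) ×ˢ univ) := by
    refine ContinuousOn.clm_apply ?_ (by fun_prop)
    exact (hL.continuousOn_fderiv_of_isOpen (hU.prod isOpen_univ) le_rfl).comp
      (f := fun z : (X × X) × E × E => (z.1.1, z.2.1)) (by fun_prop)
      fun z hz => ⟨hKU hz.1.1, mem_univ _⟩
  obtain ⟨C, hC, hle⟩ := exists_abs_le_mul_norm_sq (hK.prod (isCompact_closedBall 0 M)) hf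
    fun x hx c v => fderiv_smul_of_homogeneous hU hL hhom (hKU hx.1) c x.2 v.1 v.2
  exact ⟨C, hC, fun x hx y hy v w => hle (x, y) ⟨hx, mem_closedBall_zero_iff.2 hy⟩ (v, w)⟩

end QuadraticLagrangian

section FirstVariation

lemma exists_isCompact_eventually_add_smul_mem {α E : Type*} [TopologicalSpace α]
    [NormedAddCommGroup E] [NormedSpace ℝ E] [ProperSpace E] {I : Set α} (hI : IsCompact I)
    {x y : α → E} (hx : ContinuousOn x I) (hy : ContinuousOn y I) {U : Set E} (hU : IsOpen U)
    (hxU : MapsTo x I U) :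
    ∃ K ⊆ U, IsCompact K ∧ ∀ᶠ ε in 𝓝 (0 : ℝ), ∀ s ∈ I, x s + ε • y s ∈ K := by
  have hxI := hI.image_of_continuousOn hx
  obtain ⟨δ, hδ, hsub⟩ := hxI.exists_cthickening_subset_open hU hxU.image_subset
  obtain ⟨M, hM⟩ := hI.exists_bound_of_continuousOn hy
  have hsmall : ∀ᶠ ε in 𝓝 (0 : ℝ), |ε| * M < δ :=
    (by fun_prop : Continuous fun ε : ℝ => |ε| * M).tendsto 0
      |>.eventually_lt_const (by simpa using hδ)
  refine ⟨Metric.cthickening δ (x '' I), hsub, hxI.cthickening, ?_⟩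
  filter_upwards [hsmall] with ε hε s hs
  refine Metric.mem_cthickening_of_dist_le _ (x s) _ _ (mem_image_of_mem x hs) ?_
  rw [dist_self_add_left, norm_smul, Real.norm_eq_abs]
  exact (mul_le_mul_of_nonneg_left (hM s hs) (abs_nonneg ε)).trans hε.le

variable {L : Vec N × Vec N → ℝ} {U : Set (Vec N)} {x v y w : ℝ → Vec N} {a b : ℝ}

lemma integrableOn_comp_of_homogeneous (hU : IsOpen U) (hL : ContinuousOn L (U ×ˢ univ))
    (hhom : ∀ x ∈ U, ∀ (c : ℝ) v, L (x, c • v) = c ^ 2 * L (x, v))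
    (hx : ContinuousOn x (Icc a b)) (hxU : MapsTo x (Icc a b) U)
    (hv : MemLp v 2 (volume.restrict (Icc a b))) :
    IntegrableOn (fun s => L (x s, v s)) (Icc a b) := by
  have hK := isCompact_Icc.image_of_continuousOn hx
  obtain ⟨C, -, hC⟩ := exists_abs_le_mul_norm_sq hK
    (hL.mono (prod_mono hxU.image_subset le_rfl)) fun p hp => hhom p (hxU.image_subset hp)
  refine Integrable.mono' (hv.integrable_norm_pow two_ne_zero |>.const_mul C)
    (aestronglyMeasurable_comp_of_continuousOn hL (hU.prod isOpen_univ).measurableSet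
      ((hx.aemeasurable measurableSet_Icc).prodMk hv.1.aemeasurable) ?_) ?_
  · exact (ae_restrict_mem measurableSet_Icc).mono fun s hs => ⟨hxU hs, mem_univ _⟩
  · exact (ae_restrict_mem measurableSet_Icc).mono fun s hs => hC _ (mem_image_of_mem x hs) _

lemma exists_eventually_abs_fderiv_add_smul_le (hU : IsOpen U) (hL : ContDiffOn ℝ 1 L (U ×ˢ univ))
    (hhom : ∀ x ∈ U, ∀ (c : ℝ) v, L (x, c • v) = c ^ 2 * L (x, v))
    (hx : ContinuousOn x (Icc a b)) (hxU : MapsTo x (Icc a b) U)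
    (hy : ContinuousOn y (Icc a b)) (hw : ContinuousOn w (Icc a b)) :
    ∃ C M, ∀ᶠ ε in 𝓝 (0 : ℝ), ∀ s ∈ Icc a b, x s + ε • y s ∈ U ∧
      ∀ u, |fderiv ℝ L (x s + ε • y s, u + ε • w s) (y s, w s)| ≤ C * (‖u‖ + M) ^ 2 := by
  obtain ⟨K, hKU, hK, hmem⟩ :=
    exists_isCompact_eventually_add_smul_mem isCompact_Icc hx hy hU hxU
  obtain ⟨M, hM⟩ := isCompact_Icc.exists_bound_of_continuousOn (hy.prodMk hw)
  obtain ⟨C, hC, hle⟩ := exists_abs_fderiv_le_of_homogeneous hU hL hhom hK hKU M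
  refine ⟨C, M, ?_⟩
  filter_upwards [hmem, Metric.closedBall_mem_nhds (0 : ℝ) one_pos] with ε hε hε1 s hs
  have hw : ‖w s‖ ≤ M := (norm_snd_le (y s, w s)).trans (hM s hs)
  have hεw : ‖ε • w s‖ ≤ M := by
    rw [norm_smul]
    exact (mul_le_of_le_one_left (norm_nonneg _) (mem_closedBall_zero_iff.1 hε1)).trans hw
  refine ⟨hKU (hε s hs), fun u => ?_⟩
  refine (hle _ (hε s hs) _ ((norm_fst_le (y s, w s)).trans (hM s hs)) _ _).trans ?_
  gcongr
  exact max_le ((norm_add_le _ _).trans (by gcongr))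
    (hw.trans (le_add_of_nonneg_left (norm_nonneg _)))

lemma hasDerivAt_integral_of_homogeneous (hU : IsOpen U) (hL : ContDiffOn ℝ 1 L (U ×ˢ univ))
    (hhom : ∀ x ∈ U, ∀ (c : ℝ) v, L (x, c • v) = c ^ 2 * L (x, v))
    (hx : ContinuousOn x (Icc a b)) (hxU : MapsTo x (Icc a b) U)
    (hv : MemLp v 2 (volume.restrict (Icc a b))) (hy : Continuous y) (hw : Continuous w) :
    IntegrableOn (fun s => fderiv ℝ L (x s, v s) (y s, w s)) (Icc a b) ∧
      HasDerivAt (fun ε : ℝ => ∫ s in Icc a b, L (x s + ε • y s, v s + ε • w s))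
        (∫ s in Icc a b, fderiv ℝ L (x s, v s) (y s, w s)) 0 := by
  obtain ⟨C, M, hdom⟩ := exists_eventually_abs_fderiv_add_smul_le hU hL hhom hx hxU
    hy.continuousOn hw.continuousOn
  have hI : ∀ᵐ s ∂volume.restrict (Icc a b), s ∈ Icc a b := ae_restrict_mem measurableSet_Icc
  have hO : IsOpen (U ×ˢ (univ : Set (Vec N))) := hU.prod isOpen_univ
  have hF : ∀ᶠ ε in 𝓝 (0 : ℝ),
      IntegrableOn (fun s => L (x s + ε • y s, v s + ε • w s)) (Icc a b) := by
    filter_upwards [hdom] with ε hε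
    exact integrableOn_comp_of_homogeneous hU hL.continuousOn hhom
      (hx.add (hy.const_smul ε).continuousOn) (fun s hs => (hε s hs).1)
      (hv.add (memLp_two_restrict_Icc (hw.const_smul ε) a b))
  have hF' : AEStronglyMeasurable (fun s => fderiv ℝ L (x s, v s) (y s, w s))
      (volume.restrict (Icc a b)) :=
    (ContinuousLinearMap.id ℝ _).aestronglyMeasurable_comp₂
      (aestronglyMeasurable_comp_of_continuousOn (hL.continuousOn_fderiv_of_isOpen hO le_rfl)
        hO.measurableSet ((hx.aemeasurable measurableSet_Icc).prodMk hv.1.aemeasurable)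
        (hI.mono fun s hs => ⟨hxU hs, mem_univ _⟩))
      (hy.prodMk hw).aestronglyMeasurable
  have hder := hasDerivAt_integral_of_dominated_loc_of_deriv_le (x₀ := (0 : ℝ))
    (F := fun ε s => L (x s + ε • y s, v s + ε • w s))
    (F' := fun ε s => fderiv ℝ L (x s + ε • y s, v s + ε • w s) (y s, w s))
    (bound := fun s => C * (‖v s‖ + M) ^ 2) hdom (hF.mono fun ε h => h.1) hF.self_of_nhds
    (by simpa using hF') (hI.mono fun s hs ε hε => (hε s hs).2 _)
    ((hv.norm.add (memLp_const M)).integrable_sq.const_mul C) ?_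
  · simpa only [IntegrableOn, zero_smul, add_zero] using hder
  · filter_upwards [hI] with s hs ε hε
    have hd : DifferentiableAt ℝ L (x s + ε • y s, v s + ε • w s) :=
      (hL.differentiableOn one_ne_zero).differentiableAt
        (hO.mem_nhds ⟨(hε s hs).1, mem_univ _⟩)
    have hline : ∀ p q : Vec N, HasDerivAt (fun ε : ℝ => p + ε • q) q ε := fun p q => by
      simpa using ((hasDerivAt_id ε).smul_const q).const_add p
    exact hd.hasFDerivAt.comp_hasDerivAt ε ((hline _ _).prodMk (hline _ _))

end FirstVariation

namespace Setting

variable {S : Setting N} {Q : Vec N} {x γ ξ : ℝ → Vec N}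

variable (S) in
/-- The energy of a curve on `[0, 1]` with respect to the Jacobi metric. -/
def energy (x : ℝ → Vec N) : ℝ := ∫ s in (0 : ℝ)..1, S.lagrangian (x s, deriv x s)

lemma IsWellCurve.integrableOn_lagrangian (hx : S.IsWellCurve x 0 1) :
    IntegrableOn (fun s => S.lagrangian (x s, deriv x s)) (Icc 0 1) :=
  integrableOn_comp_of_homogeneous S.hU S.contDiffOn_lagrangian.continuousOn
    (fun x _ c v => S.lagrangian_smul x v c) hx.h1On.1 (fun _ hs => hx.mem_U hs) hx.h1On.memLp_deriv

lemma IsWellCurve.integrableOn_sq_jacobiNorm_sub (hx : S.IsWellCurve x 0 1) (c : ℝ) :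
    IntegrableOn (fun s => (S.jacobiNorm (x s) (deriv x s) - c) ^ 2) (Icc 0 1) ∧
    ∫ s in Icc (0 : ℝ) 1, (S.jacobiNorm (x s) (deriv x s) - c) ^ 2
      = S.energy x - 2 * c * S.LV x + c ^ 2 := by
  have hL := hx.integrableOn_lagrangian
  have hj := hx.integrableOn_jacobiNorm.const_mul (2 * c)
  have hLj : IntegrableOn (fun s => S.lagrangian (x s, deriv x s)
      - 2 * c * S.jacobiNorm (x s) (deriv x s)) (Icc 0 1) := hL.sub hj
  have hc : IntegrableOn (fun _ : ℝ => c ^ 2) (Icc 0 1) := continuous_const.integrableOn_Icc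
  have hexp : EqOn (fun s => S.lagrangian (x s, deriv x s)
      - 2 * c * S.jacobiNorm (x s) (deriv x s) + c ^ 2)
      (fun s => (S.jacobiNorm (x s) (deriv x s) - c) ^ 2) (Icc 0 1) := fun s hs => by
    simp only [sub_sq, S.jacobiNorm_sq (hx.le s hs)]
    ring
  refine ⟨(hLj.add hc).congr_fun hexp measurableSet_Icc, ?_⟩
  rw [← setIntegral_congr_fun measurableSet_Icc hexp, integral_add hLj hc,
    integral_sub hL hj, integral_const_mul, LV_eq_arcLen, energy, arcLen,
    intervalIntegral.integral_of_le zero_le_one, intervalIntegral.integral_of_le zero_le_one,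
    integral_Icc_eq_integral_Ioc, integral_Icc_eq_integral_Ioc]
  simp

lemma IsWellCurve.sq_LV_le_energy (hx : S.IsWellCurve x 0 1) : S.LV x ^ 2 ≤ S.energy x := by
  have h : 0 ≤ ∫ s in Icc (0 : ℝ) 1, (S.jacobiNorm (x s) (deriv x s) - S.LV x) ^ 2 :=
    integral_nonneg fun _ => sq_nonneg _
  rw [(hx.integrableOn_sq_jacobiNorm_sub _).2] at h
  linarith

lemma dV_nonneg (Q : Vec N) : 0 ≤ S.dV Q :=
  Real.sInf_nonneg <| by rintro _ ⟨x, -, rfl⟩; exact arcLen_nonneg zero_le_one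

lemma InXQ.sq_dV_le_energy (hx : S.InXQ Q x) : S.dV Q ^ 2 ≤ S.energy x :=
  (pow_le_pow_left₀ (dV_nonneg Q) hx.dV_le 2).trans hx.isWellCurve.sq_LV_le_energy

variable (S) in
/-- `γ` is an admissible curve of least energy: by Cauchy-Schwarz no admissible curve has energy
below `S.dV Q ^ 2`. -/
structure IsEnergyMinimizer (Q : Vec N) (γ : ℝ → Vec N) : Prop where
  inXQ : S.InXQ Q γ
  energy_le : S.energy γ ≤ S.dV Q ^ 2

lemma exists_isEnergyMinimizer (hQ : S.V Q < S.E) : ∃ γ, S.IsEnergyMinimizer Q γ := by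
  obtain ⟨x, τ, γ₀, h₀⟩ := exists_isMinimizingLimit hQ
  obtain ⟨γ, hγ, h⟩ := h₀.exists_H1On_congr hQ
  have hX : S.InXQ Q γ := h.inXQ_limit hQ hγ
  refine ⟨γ, hX, ?_⟩
  have hle : ∀ᵐ s ∂volume.restrict (Icc (0 : ℝ) 1),
      S.lagrangian (γ s, deriv γ s) ≤ S.dV Q ^ 2 := by
    have hd := ae_restrict_Icc_iff.1 hγ.ae_hasDerivAt
    refine ae_restrict_Icc_iff.2 (hd.mono fun s hs hsI => ?_)
    rw [← S.jacobiNorm_sq (hX.isWellCurve.le s (Ioo_subset_Icc_self hsI))]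
    exact pow_le_pow_left₀ (S.jacobiNorm_nonneg _ _) (h.jacobiNorm_deriv_le hQ hsI (hs hsI)) 2
  calc S.energy γ = ∫ s in Icc (0 : ℝ) 1, S.lagrangian (γ s, deriv γ s) := by
        rw [energy, intervalIntegral.integral_of_le zero_le_one, integral_Icc_eq_integral_Ioc]
    _ ≤ ∫ _ in Icc (0 : ℝ) 1, S.dV Q ^ 2 :=
        integral_mono_ae hX.isWellCurve.integrableOn_lagrangian
          continuous_const.integrableOn_Icc hle
    _ = S.dV Q ^ 2 := by simp

lemma InXQ.eventually_add_smul (hx : S.InXQ Q x) (hξ : ContDiff ℝ 1 ξ)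
    (hsupp : tsupport ξ ⊆ Ioo 0 1) : ∀ᶠ ε in 𝓝 (0 : ℝ), S.InXQ Q (x + ε • ξ) := by
  have hcomp : IsCompact (tsupport ξ) :=
    isCompact_Icc.of_isClosed_subset (isClosed_tsupport ξ) (hsupp.trans Ioo_subset_Icc_self)
  obtain ⟨K, hK, -, hmem⟩ := exists_isCompact_eventually_add_smul_mem hcomp
    (hx.1.1.mono (hsupp.trans Ioo_subset_Icc_self)) hξ.continuous.continuousOn S.isOpen_well
    fun s hs => hx.2.2.1 s (Ioo_subset_Ioc_self (hsupp hs))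
  have hout : ∀ s ∉ tsupport ξ, ∀ ε : ℝ, (x + ε • ξ) s = x s := fun s hs ε => by
    simp [image_eq_zero_of_notMem_tsupport hs]
  filter_upwards [hmem] with ε hε
  refine ⟨hx.1.add (.of_contDiff (hξ.const_smul ε)), ?_, fun s hs => ?_, ?_⟩
  · rw [hout 0 fun h => (hsupp h).1.ne rfl, hx.2.1]
  · by_cases hs' : s ∈ tsupport ξ
    · exact hK (hε s hs')
    · exact hout s hs' ε ▸ hx.2.2.1 s hs
  · rw [hout 1 fun h => (hsupp h).2.ne rfl, hx.2.2.2]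

lemma IsWellCurve.hasDerivAt_energy (hx : S.IsWellCurve x 0 1) (hξ : ContDiff ℝ 1 ξ) :
    HasDerivAt (fun ε : ℝ => S.energy (x + ε • ξ))
      (∫ s in (0 : ℝ)..1, fderiv ℝ S.lagrangian (x s, deriv x s) (ξ s, deriv ξ s)) 0 := by
  have hder := (hasDerivAt_integral_of_homogeneous S.hU
    (S.contDiffOn_lagrangian.of_le (by norm_num)) (fun x _ c v => S.lagrangian_smul x v c) hx.h1On.1
    (fun _ hs => hx.mem_U hs) hx.h1On.memLp_deriv hξ.continuous (hξ.continuous_deriv le_rfl)).2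
  rw [intervalIntegral.integral_of_le zero_le_one, ← integral_Icc_eq_integral_Ioc]
  refine hder.congr_of_eventuallyEq (Eventually.of_forall fun ε => ?_)
  simp only [energy]
  rw [intervalIntegral.integral_of_le zero_le_one, ← integral_Icc_eq_integral_Ioc]
  refine integral_congr_ae (hx.h1On.ae_hasDerivAt.mono fun s hs => ?_)
  have hsum := hs.add ((hξ.differentiable one_ne_zero s).hasDerivAt.const_smul ε)
  simp only [hsum.deriv, Pi.add_apply, Pi.smul_apply]

namespace IsEnergyMinimizer

lemma ae_jacobiNorm_eq (h : S.IsEnergyMinimizer Q γ) :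
    ∀ᵐ s ∂volume.restrict (Icc (0 : ℝ) 1), S.jacobiNorm (γ s) (deriv γ s) = S.dV Q := by
  obtain ⟨hint, heq⟩ := h.inXQ.isWellCurve.integrableOn_sq_jacobiNorm_sub (S.dV Q)
  have hzero : ∫ s in Icc (0 : ℝ) 1, (S.jacobiNorm (γ s) (deriv γ s) - S.dV Q) ^ 2 = 0 := by
    refine le_antisymm ?_ (integral_nonneg fun _ => sq_nonneg _)
    rw [heq]
    nlinarith [h.energy_le, h.inXQ.dV_le, S.dV_nonneg Q]
  filter_upwards [(integral_eq_zero_iff_of_nonneg (fun _ => sq_nonneg _) hint).1 hzero] with s hs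
  exact sub_eq_zero.1 (pow_eq_zero_iff two_ne_zero |>.1 hs)

lemma LV_eq_dV (h : S.IsEnergyMinimizer Q γ) : S.LV γ = S.dV Q := by
  rw [LV_eq_arcLen, arcLen, intervalIntegral.integral_of_le zero_le_one,
    ← integral_Icc_eq_integral_Ioc, integral_congr_ae h.ae_jacobiNorm_eq]
  simp

lemma integral_fderiv_lagrangian (h : S.IsEnergyMinimizer Q γ) (hξ : ContDiff ℝ 1 ξ)
    (hsupp : tsupport ξ ⊆ Ioo 0 1) :
    ∫ s in (0 : ℝ)..1, fderiv ℝ S.lagrangian (γ s, deriv γ s) (ξ s, deriv ξ s) = 0 := by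
  refine IsLocalMin.hasDerivAt_eq_zero ?_ (h.inXQ.isWellCurve.hasDerivAt_energy hξ)
  filter_upwards [h.inXQ.eventually_add_smul hξ hsupp] with ε hε
  simpa using h.energy_le.trans hε.sq_dV_le_energy

end IsEnergyMinimizer

end Setting

section MatrixInverse

variable {X ι : Type*} [NormedAddCommGroup X] [NormedSpace ℝ X] [Fintype ι] [DecidableEq ι]
  {n : WithTop ℕ∞} {s : Set X}

lemma contDiffOn_det {A : X → Matrix ι ι ℝ} (hA : ∀ i j, ContDiffOn ℝ n (fun x => A x i j) s) :
    ContDiffOn ℝ n (fun x => (A x).det) s := by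
  simp only [Matrix.det_apply]
  exact ContDiffOn.sum fun σ _ => (contDiffOn_prod fun i _ => hA _ _).const_smul _

lemma contDiffOn_matrix_inv {A : X → Matrix ι ι ℝ}
    (hA : ∀ i j, ContDiffOn ℝ n (fun x => A x i j) s) (hdet : ∀ x ∈ s, (A x).det ≠ 0) (i j : ι) :
    ContDiffOn ℝ n (fun x => (A x)⁻¹ i j) s := by
  simp only [Matrix.inv_def, Matrix.smul_apply, Matrix.adjugate_apply, Ring.inverse_eq_inv',
    smul_eq_mul]
  refine ((contDiffOn_det hA).inv hdet).mul (contDiffOn_det fun a b => ?_)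
  simp only [Matrix.updateRow_apply]
  split_ifs
  exacts [contDiffOn_const, hA a b]

end MatrixInverse

namespace Setting

section Legendre

variable (S : Setting N) {x : Vec N}

lemma isUnit_det_g (hx : x ∈ S.U) : IsUnit (S.g x).det := (S.posDef_g hx).det_pos.ne'.isUnit

lemma fderiv_lagrangian_apply (hx : x ∈ S.U) (v y w : Vec N) :
    fderiv ℝ S.lagrangian (x, v) (y, w) = (S.E - S.V x) * S.prod x v w
      + (1 / 2) * ((S.E - S.V x) * fderiv ℝ S.metricForm x y v v
        - fderiv ℝ S.V x y * S.prod x v v) := by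
  have hfst : HasFDerivAt Prod.fst (.fst ℝ (Vec N) (Vec N)) (x, v) := hasFDerivAt_fst
  have hV : HasFDerivAt (fun z : Vec N × Vec N => S.V z.1) _ (x, v) :=
    (differentiableAt_V hx).hasFDerivAt.comp (x, v) hfst
  have hgx : DifferentiableAt ℝ S.metricForm x :=
    (S.contDiffOn_metricForm.differentiableOn three_ne_zero).differentiableAt (S.hU.mem_nhds hx)
  have hg := HasFDerivAt.comp (g := S.metricForm) (x, v) hgx.hasFDerivAt hfst
  have hL : S.lagrangian = fun z => 1 / 2 * (S.E - S.V z.1) * S.metricForm z.1 z.2 z.2 :=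
    funext fun z => by rw [metricForm_apply, lagrangian]
  have hder := ((hV.const_sub S.E).const_mul (1 / 2)).mul
    ((hg.clm_apply hasFDerivAt_snd).clm_apply hasFDerivAt_snd)
  rw [(hder.congr_of_eventuallyEq (.of_eq hL)).fderiv]
  simp [S.prod_comm hx w v]
  ring

/-- The momentum `∂L/∂v` of the Lagrangian `S.lagrangian`. -/
def momentum (x v : Vec N) : Vec N := (S.E - S.V x) • (S.g x *ᵥ v)

/-- The generalized force `∂L/∂x` of the Lagrangian `S.lagrangian`. -/
def force (x v : Vec N) : Vec N := fun i => fderiv ℝ S.lagrangian (x, v) (Pi.single i 1, 0)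

/-- The velocity at `x` with momentum `p`: the inverse of the Legendre transformation
`S.momentum x`. -/
def velocity (x p : Vec N) : Vec N := (S.E - S.V x)⁻¹ • ((S.g x)⁻¹ *ᵥ p)

lemma fderiv_lagrangian_single (hx : x ∈ S.U) (v : Vec N) (i : Fin N) (c d : ℝ) :
    fderiv ℝ S.lagrangian (x, v) (c • Pi.single i 1, d • Pi.single i 1)
      = c * S.force x v i + d * S.momentum x v i := by
  have hsplit : (c • Pi.single i 1, d • Pi.single i 1)
      = c • (Pi.single i 1, (0 : Vec N)) + d • ((0 : Vec N), Pi.single i (1 : ℝ)) := by simp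
  rw [hsplit, map_add, map_smul, map_smul, fderiv_lagrangian_apply S hx v 0, prod_comm S hx,
    prod_eq_dotProduct]
  simp [momentum, force]

lemma velocity_momentum (hx : S.V x < S.E) (v : Vec N) :
    S.velocity x (S.momentum x v) = v := by
  rw [velocity, momentum, mulVec_smul, mulVec_mulVec,
    Matrix.nonsing_inv_mul _ (S.isUnit_det_g (S.mem_U hx.le)), one_mulVec,
    inv_smul_smul₀ (sub_pos.2 hx).ne']

lemma contDiffOn_velocity :
    ContDiffOn ℝ 2 (fun z : Vec N × Vec N => S.velocity z.1 z.2) ({x | S.V x < S.E} ×ˢ univ) := by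
  have hfst : ContDiffOn ℝ 2 Prod.fst ({x | S.V x < S.E} ×ˢ (univ : Set (Vec N))) :=
    contDiffOn_fst
  have hU : MapsTo Prod.fst ({x | S.V x < S.E} ×ˢ (univ : Set (Vec N))) S.U := fun z hz =>
    S.mem_U (le_of_lt hz.1)
  have hinv := contDiffOn_matrix_inv S.hgC fun x hx => (S.isUnit_det_g hx).ne_zero
  refine ((contDiffOn_const.sub (S.hVC.comp hfst hU)).inv fun z hz =>
    (sub_pos.2 hz.1).ne').smul (contDiffOn_pi.2 fun i => ?_)
  simp only [mulVec, dotProduct]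
  exact ContDiffOn.sum fun j _ => (((hinv i j).of_le (by norm_num)).comp hfst hU).mul
    ((contDiff_apply ℝ ℝ j).comp_contDiffOn contDiffOn_snd)

lemma continuousOn_force :
    ContinuousOn (fun z : Vec N × Vec N => S.force z.1 z.2) (S.U ×ˢ univ) :=
  continuousOn_pi.2 fun _ => (S.contDiffOn_lagrangian.continuousOn_fderiv_of_isOpen
    (S.hU.prod isOpen_univ) one_le_two).clm_apply continuousOn_const

end Legendre

variable {S : Setting N} {Q : Vec N} {x γ : ℝ → Vec N}

lemma IsWellCurve.integrableOn_fderiv_lagrangian (hx : S.IsWellCurve x 0 1) (y w : Vec N) :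
    IntegrableOn (fun s => fderiv ℝ S.lagrangian (x s, deriv x s) (y, w)) (Icc 0 1) :=
  (hasDerivAt_integral_of_homogeneous S.hU (S.contDiffOn_lagrangian.of_le (by norm_num))
    (fun x _ c v => S.lagrangian_smul x v c) hx.h1On.1 (fun _ hs => hx.mem_U hs)
    hx.h1On.memLp_deriv continuous_const continuous_const).1

lemma IsWellCurve.integrableOn_force (hx : S.IsWellCurve x 0 1) :
    IntegrableOn (fun s => S.force (x s) (deriv x s)) (Icc 0 1) :=
  Integrable.of_eval fun i => hx.integrableOn_fderiv_lagrangian (Pi.single i 1) 0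

lemma IsWellCurve.integrableOn_momentum (hx : S.IsWellCurve x 0 1) :
    IntegrableOn (fun s => S.momentum (x s) (deriv x s)) (Icc 0 1) := by
  refine Integrable.of_eval fun i =>
    IntegrableOn.congr_fun (hx.integrableOn_fderiv_lagrangian 0 (Pi.single i 1)) (fun s hs => ?_)
      measurableSet_Icc
  simpa using S.fderiv_lagrangian_single (hx.mem_U hs) (deriv x s) i 0 1

namespace IsEnergyMinimizer

lemma euler_lagrange (h : S.IsEnergyMinimizer Q γ) :
    ∃ c, (fun s => S.momentum (γ s) (deriv γ s)) =ᵐ[volume.restrict (Icc (0 : ℝ) 1)]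
      fun s => c + ∫ u in (0 : ℝ)..s, S.force (γ u) (deriv γ u) := by
  have hw := h.inXQ.isWellCurve
  have hF := (intervalIntegrable_iff_integrableOn_Icc_of_le zero_le_one).2 hw.integrableOn_force
  have hM := (intervalIntegrable_iff_integrableOn_Icc_of_le zero_le_one).2 hw.integrableOn_momentum
  refine du_bois_reymond zero_lt_one hw.integrableOn_force hw.integrableOn_momentum
    fun φ hφ hsupp => funext fun i => ?_
  have hφ1 : ContDiff ℝ 1 φ := hφ.of_le (by exact_mod_cast le_top)
  have hint := (hF.continuousOn_smul hφ.continuous.continuousOn).add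
    (hM.continuousOn_smul (hφ1.continuous_deriv le_rfl).continuousOn)
  have hξ := h.integral_fderiv_lagrangian (hφ1.smul (contDiff_const (c := Pi.single i 1)))
    ((tsupport_smul_subset_left _ _).trans hsupp)
  refine (ContinuousLinearMap.intervalIntegral_comp_comm
    (.proj (R := ℝ) (φ := fun _ : Fin N => ℝ) i) hint).symm.trans (.trans ?_ hξ)
  refine intervalIntegral.integral_congr fun s hs => ?_
  rw [uIcc_of_le zero_le_one] at hs
  have hd := ((hφ1.differentiable one_ne_zero s).hasDerivAt.smul_const
    (Pi.single i 1 : Vec N)).deriv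
  have hs' := S.fderiv_lagrangian_single (hw.mem_U hs) (deriv γ s) i (φ s) (deriv φ s)
  simp only [Pi.smul_def']
  rw [hd, hs']
  simp

lemma contDiffOn (h : S.IsEnergyMinimizer Q γ) : ContDiffOn ℝ 2 γ (Ioo 0 1) := by
  have hw := h.inXQ.isWellCurve
  have hlt : ∀ s ∈ Ioo (0 : ℝ) 1, S.V (γ s) < S.E := fun s hs =>
    h.inXQ.2.2.1 s (Ioo_subset_Ioc_self hs)
  have hγ0 : ContinuousOn γ (Ioo 0 1) := hw.h1On.1.mono Ioo_subset_Icc_self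
  obtain ⟨c, hc⟩ := h.euler_lagrange
  set p := fun s => c + ∫ u in (0 : ℝ)..s, S.force (γ u) (deriv γ u)
  have hp0 : ContinuousOn p (Ioo 0 1) := by
    have hcont := intervalIntegral.continuousOn_primitive_interval (μ := volume)
      (uIcc_of_le (zero_le_one (α := ℝ)) ▸ hw.integrableOn_force)
    rw [uIcc_of_le zero_le_one] at hcont
    exact continuousOn_const.add (hcont.mono Ioo_subset_Icc_self)
  have hvel {n : WithTop ℕ∞} (hn : n ≤ 2) (hγ : ContDiffOn ℝ n γ (Ioo 0 1))
      (hp : ContDiffOn ℝ n p (Ioo 0 1)) :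
      ContDiffOn ℝ n (fun s => S.velocity (γ s) (p s)) (Ioo 0 1) :=
    (S.contDiffOn_velocity.of_le hn).comp (hγ.prodMk hp) fun s hs => ⟨hlt s hs, mem_univ _⟩
  have hvel0 := hvel zero_le_two (contDiffOn_zero.2 hγ0) (contDiffOn_zero.2 hp0)
  have hae : deriv γ =ᵐ[volume.restrict (Icc 0 1)] fun s => S.velocity (γ s) (p s) := by
    refine ae_restrict_Icc_iff.2 ((ae_restrict_Icc_iff.1 hc).mono fun s hs hsI => ?_)
    simp only [← hs hsI, S.velocity_momentum (hlt s hsI)]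
  have hder : ∀ s ∈ Ioo (0 : ℝ) 1, HasDerivAt γ (S.velocity (γ s) (p s)) s := fun s hs =>
    hw.h1On.hasDerivAt_of_ae_eq hvel0.continuousOn hae hs
  have hγ1 : ContDiffOn ℝ 1 γ (Ioo 0 1) := contDiffOn_succ_of_hasDerivAt (n := 0) hder hvel0
  have hforce : ContinuousOn (fun s => S.force (γ s) (deriv γ s)) (Ioo 0 1) :=
    S.continuousOn_force.comp (hγ0.prodMk (hγ1.continuousOn_deriv_of_isOpen isOpen_Ioo le_rfl))
      fun s hs => ⟨S.mem_U (hlt s hs).le, mem_univ _⟩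
  have hp1 : ContDiffOn ℝ 1 p (Ioo 0 1) := contDiffOn_succ_of_hasDerivAt (n := 0)
    (fun s hs => (hasDerivAt_primitive hw.integrableOn_force hforce hs).const_add c)
    (contDiffOn_zero.2 hforce)
  exact contDiffOn_succ_of_hasDerivAt (n := 1) hder (hvel one_le_two hγ1 hp1)

lemma lagrangian_eq (h : S.IsEnergyMinimizer Q γ) :
    EqOn (fun s => S.lagrangian (γ s, deriv γ s)) (fun _ => S.dV Q ^ 2) (Ioo 0 1) := by
  have hw := h.inXQ.isWellCurve
  have hcont : ContinuousOn (fun s => S.lagrangian (γ s, deriv γ s)) (Ioo 0 1) :=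
    S.contDiffOn_lagrangian.continuousOn.comp (h.contDiffOn.continuousOn.prodMk
      (h.contDiffOn.continuousOn_deriv_of_isOpen isOpen_Ioo one_le_two))
      fun s hs => ⟨hw.mem_U (Ioo_subset_Icc_self hs), mem_univ _⟩
  refine Measure.eqOn_open_of_ae_eq (μ := volume) ?_ isOpen_Ioo hcont continuousOn_const
  filter_upwards [ae_restrict_of_ae_restrict_of_subset Ioo_subset_Icc_self h.ae_jacobiNorm_eq,
    ae_restrict_mem measurableSet_Ioo] with s hs hsI
  rw [← hs, S.jacobiNorm_sq (hw.le s (Ioo_subset_Icc_self hsI))]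

end IsEnergyMinimizer

end Setting

namespace Setting

section LeviCivita

variable (S : Setting N) {x : Vec N}

lemma prod_grad (hx : x ∈ S.U) (y : Vec N) : S.prod x (S.grad x) y = fderiv ℝ S.V x y := by
  rw [S.prod_comm hx, prod_eq_dotProduct, grad, mulVec_mulVec,
    Matrix.mul_nonsing_inv _ (S.isUnit_det_g hx), one_mulVec, fderiv_apply_eq_dotProduct]

lemma fderiv_metricForm_apply (hx : x ∈ S.U) (z v w : Vec N) :
    fderiv ℝ S.metricForm x z v w
      = ∑ i, ∑ j, fderiv ℝ (fun y => S.g y i j) x z * v i * w j := by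
  have hg : ∀ i j, HasFDerivAt (fun y => S.g y i j) (fderiv ℝ (fun y => S.g y i j) x) x :=
    fun i j => (((S.hgC i j).differentiableOn three_ne_zero).differentiableAt
      (S.hU.mem_nhds hx)).hasFDerivAt
  have hgx : DifferentiableAt ℝ S.metricForm x :=
    (S.contDiffOn_metricForm.differentiableOn three_ne_zero).differentiableAt (S.hU.mem_nhds hx)
  have hform := (hgx.hasFDerivAt.clm_apply (hasFDerivAt_const v x)).clm_apply
    (hasFDerivAt_const w x)
  have hsum : HasFDerivAt (fun y => ∑ i, ∑ j, S.g y i j * v i * w j)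
      (∑ i, ∑ j, w j • v i • fderiv ℝ (fun y => S.g y i j) x) x :=
    HasFDerivAt.fun_sum fun i _ => HasFDerivAt.fun_sum fun j _ =>
      ((hg i j).mul_const (v i)).mul_const (w j)
  have heq : (fun y => S.metricForm y v w) = fun y => ∑ i, ∑ j, S.g y i j * v i * w j :=
    funext fun y => S.metricForm_apply y v w
  rw [heq] at hform
  have h := DFunLike.congr_fun (hform.unique hsum) z
  simpa [mul_comm, mul_left_comm] using h

lemma sum_g_mul_christoffel (hx : x ∈ S.U) (l i j : Fin N) :
    ∑ k, S.g x l k * S.christoffel x k i j = (1 / 2) *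
      (fderiv ℝ (fun y => S.g y l j) x (Pi.single i 1)
        + fderiv ℝ (fun y => S.g y l i) x (Pi.single j 1)
        - fderiv ℝ (fun y => S.g y i j) x (Pi.single l 1)) := by
  set F : Vec N := fun l => fderiv ℝ (fun y => S.g y l j) x (Pi.single i 1)
    + fderiv ℝ (fun y => S.g y l i) x (Pi.single j 1)
    - fderiv ℝ (fun y => S.g y i j) x (Pi.single l 1)
  have hΓ : (fun k => S.christoffel x k i j) = (1 / 2 : ℝ) • ((S.g x)⁻¹ *ᵥ F) := rfl
  have h : S.g x *ᵥ (fun k => S.christoffel x k i j) = (1 / 2 : ℝ) • F := by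
    rw [hΓ, mulVec_smul, mulVec_mulVec, Matrix.mul_nonsing_inv _ (S.isUnit_det_g hx), one_mulVec]
  exact congrFun h l

lemma prod_christoffel (hx : x ∈ S.U) (u v w : Vec N) :
    S.prod x u (fun k => ∑ i, ∑ j, S.christoffel x k i j * v i * w j)
      = (1 / 2) * (fderiv ℝ S.metricForm x v u w + fderiv ℝ S.metricForm x w u v
        - fderiv ℝ S.metricForm x u v w) := by
  have hlower : S.prod x u (fun k => ∑ i, ∑ j, S.christoffel x k i j * v i * w j)
      = ∑ l, ∑ i, ∑ j, u l * v i * w j * ∑ k, S.g x l k * S.christoffel x k i j := by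
    simp only [prod, gP, Finset.mul_sum]
    refine Finset.sum_congr rfl fun l _ => ?_
    rw [Finset.sum_comm]
    refine Finset.sum_congr rfl fun i _ => ?_
    rw [Finset.sum_comm]
    exact Finset.sum_congr rfl fun j _ => Finset.sum_congr rfl fun k _ => by ring
  simp only [hlower, S.sum_g_mul_christoffel hx, S.fderiv_metricForm_apply hx,
    fderiv_apply_eq_dotProduct _ _ u, fderiv_apply_eq_dotProduct _ _ v,
    fderiv_apply_eq_dotProduct _ _ w, dotProduct, euclGrad, mul_add, mul_sub,
    Finset.sum_add_distrib, Finset.sum_sub_distrib, Finset.mul_sum, Finset.sum_mul]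
  congr 1
  · congr 1
    · refine Finset.sum_congr rfl fun l _ => Finset.sum_comm.trans ?_
      exact Finset.sum_congr rfl fun j _ => Finset.sum_congr rfl fun i _ => by ring
    · exact Finset.sum_congr rfl fun l _ => Finset.sum_congr rfl fun i _ =>
        Finset.sum_congr rfl fun j _ => by ring
  · refine Finset.sum_comm.trans (Finset.sum_congr rfl fun i _ => Finset.sum_comm.trans ?_)
    exact Finset.sum_congr rfl fun j _ => Finset.sum_congr rfl fun l _ => by ring

lemma fderiv_lagrangian_eq_covD {q q' ξ ξ' : ℝ → Vec N} {s : ℝ} (hq : q s ∈ S.U) :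
    (S.E - S.V (q s)) * S.prod (q s) (q' s) (S.covD q q' ξ ξ' s)
        - (1 / 2) * S.prod (q s) (q' s) (q' s) * S.prod (q s) (S.grad (q s)) (ξ s)
      = fderiv ℝ S.lagrangian (q s, q' s) (ξ s, ξ' s) := by
  have hcov : S.covD q q' ξ ξ' s
      = ξ' s + fun k => ∑ i, ∑ j, S.christoffel (q s) k i j * q' s i * ξ s j := rfl
  have hadd := map_add (S.metricForm (q s) (q' s)) (ξ' s)
    (fun k => ∑ i, ∑ j, S.christoffel (q s) k i j * q' s i * ξ s j)
  simp only [metricForm_apply, ← hcov, S.prod_christoffel hq] at hadd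
  rw [hadd, S.prod_grad hq, S.fderiv_lagrangian_apply hq]
  ring

end LeviCivita

lemma IsEnergyMinimizer.weakGeo {S : Setting N} {Q : Vec N} {γ : ℝ → Vec N}
    (h : S.IsEnergyMinimizer Q γ) : S.WeakGeo γ 0 1 := fun ξ hξ hsupp => by
  refine Eq.trans (intervalIntegral.integral_congr fun s hs => ?_)
    (h.integral_fderiv_lagrangian (hξ.of_le (by exact_mod_cast le_top)) hsupp)
  refine S.fderiv_lagrangian_eq_covD (q := γ) (q' := deriv γ) (ξ' := deriv ξ) ?_
  exact h.inXQ.isWellCurve.mem_U (uIcc_of_le (zero_le_one (α := ℝ)) ▸ hs)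

end Setting

/-- **Lemma 3.1**: the infimum `d_V(Q)` is attained by a curve `γ_Q ∈ X_Q` which has
constant `(E−V(γ_Q))g(γ̇_Q,γ̇_Q)`, stays in the well on `(0,1]`, is `C²` on `(0,1)`,
and satisfies the weak geodesic equation (2.7) on `[0,1]`. -/
theorem minimizer_exists {N : ℕ} (S : Setting N) (Q : Vec N) (hQ : S.V Q < S.E) :
    ∃ γ : ℝ → Vec N,
      S.InXQ Q γ ∧
      S.LV γ = S.dV Q ∧
      (∀ x, S.InXQ Q x → S.LV γ ≤ S.LV x) ∧
      (∃ c : ℝ, ∀ s ∈ Ioo (0:ℝ) 1,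
        (S.E - S.V (γ s)) * S.prod (γ s) (deriv γ s) (deriv γ s) = c) ∧
      ContDiffOn ℝ 2 γ (Ioo 0 1) ∧
      S.WeakGeo γ 0 1 := by
  obtain ⟨γ, hγ⟩ := Setting.exists_isEnergyMinimizer hQ
  refine ⟨γ, hγ.inXQ, hγ.LV_eq_dV, fun x hx => hγ.LV_eq_dV.trans_le hx.dV_le,
    ⟨2 * S.dV Q ^ 2, fun s hs => ?_⟩, hγ.contDiffOn, hγ.weakGeo⟩
  have h := hγ.lagrangian_eq hs
  simp only [Setting.lagrangian] at h
  linarith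

end
end JacobiPaper
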